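/- Let n ≥ 1, 1 < p < ∞, 1 ≤ q ≤ ∞, 0 ≤ α < n(p-1), let M ∈ ℕ and let s be a real number with s < M, and suppose that either s > (n+α)/p, or s = (n+α)/p and q = 1. Then for every f in the weighted Besov space B^s_{p,q}(ℝ^n, |·|^α) (defined via the ball-means-of-differences norm of order M), the function f² also belongs to B^s_{p,q}(ℝ^n, |·|^α). -/

import Mathlib

/-!
Write `D(t) = ‖d_t^M f‖` for the norm of the ball means in `L^p(|·|^α)` and
`T_{K,τ} f(x) = ∫ K(a) f(x + τ a) da`. Expanding the `M`-th difference gives a smooth compactly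
supported kernel `K` with `|f - T_{K,τ} f| ≤ c d_τ^M f` pointwise (`exists_ker`). Put
`g_τ = T_{K,τ} T_{K,τ} f`. Smoothings at the same scale commute, and doubling the scale amounts to
replacing the kernel by a dilate, so `g_τ - g_{2τ}` is a smoothing at scale `τ` of
`T_{K,τ} f - T_{K,2τ} f` (`RepKer.smt_sub`), a function of norm at most `c (D(τ) + D(2τ))`.

Since `0 ≤ α < n(p-1)`, averages at scale `τ` are bounded on `L^p(|·|^α)` uniformly in `τ`
(`avg_Lp`), and from `L^p(|·|^α)` to `L^∞` with norm `O(τ^{-(n+α)/p})` (`avg_le_sup`). The hypothesis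
on `s` and `q` makes `∑_j τ_j^{-(n+α)/p} D(τ_j)` finite along some dyadic sequence `τ_j`
(`FinB.exists_dyadic`), and telescoping `g_{τ_j}` shows that `f` is essentially bounded
(`RepKer.ae_bdd`). After truncation `f` may be taken bounded everywhere.

For bounded `f`, decompose
`f² = (f² - g_t²) + ∑_{j<J} (g_{2^j t}² - g_{2^{j+1} t}²) + g_{2^J t}²`.
The first term has norm `O(D(t))`. Each of the others is a sum of products of two smoothings at a
common scale `2^j t`, so its `M`-th differences with steps of length at most `t` gain the factor
`2^{-jM}` (`iterDiff_mul_le`). Hence (`RepKer.bmNorm_sq`)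
`‖d_t^M (f²)‖ ≤ C (∑_{j≤J} 2^{-jM} D(2^j t) + 2^{-JM})`,
and as `s < M` a discrete Hardy inequality (`FinB.of_dyadic_le`), with `J` maximal such that
`2^J t < 1`, gives the claim.
-/

open MeasureTheory ENNReal Filter

noncomputable section

/-- Weighted `L^p` "norm" with power weight `|x|^α`, for `ℝ≥0∞`-valued functions. -/
noncomputable def wLpE (n : ℕ) (p α : ℝ) (F : EuclideanSpace ℝ (Fin n) → ℝ≥0∞) : ℝ≥0∞ :=
  (∫⁻ x, F x ^ p * (‖x‖₊ : ℝ≥0∞) ^ α) ^ (1 / p)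

/-- Weighted `L^p` norm `(∫ |f(x)|^p |x|^α dx)^(1/p)`. -/
noncomputable def wLp (n : ℕ) (p α : ℝ) (f : EuclideanSpace ℝ (Fin n) → ℝ) : ℝ≥0∞ :=
  wLpE n p α (fun x => (‖f x‖₊ : ℝ≥0∞))

/-- Iterated difference `Δ_h^M f (x) = ∑_{i=0}^M (-1)^(M-i) C(M,i) f (x + i h)`. -/
def iterDiff (n M : ℕ) (f : EuclideanSpace ℝ (Fin n) → ℝ) (h x : EuclideanSpace ℝ (Fin n)) : ℝ :=
  ∑ i ∈ Finset.range (M + 1), (-1 : ℝ) ^ (M - i) * (M.choose i : ℝ) * f (x + (i : ℝ) • h)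

/-- Ball means of differences `d_t^M f (x) = ∫_{|h| ≤ 1} |Δ_{t h}^M f (x)| dh`. -/
noncomputable def ballMeans (n M : ℕ) (f : EuclideanSpace ℝ (Fin n) → ℝ) (t : ℝ)
    (x : EuclideanSpace ℝ (Fin n)) : ℝ≥0∞ :=
  ∫⁻ h in {h : EuclideanSpace ℝ (Fin n) | ‖h‖ ≤ 1}, (‖iterDiff n M f (t • h) x‖₊ : ℝ≥0∞)

/-- The weighted Besov norm defined via ball means of differences of order `M`. -/
noncomputable def besovNorm (n : ℕ) (p α s : ℝ) (q : ℝ≥0∞) (M : ℕ)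
    (f : EuclideanSpace ℝ (Fin n) → ℝ) : ℝ≥0∞ :=
  wLp n p α f +
    if q = ∞ then
      ⨆ t ∈ Set.Ioo (0 : ℝ) 1, ENNReal.ofReal (t ^ (-s)) * wLpE n p α (ballMeans n M f t)
    else
      (∫⁻ t in Set.Ioo (0 : ℝ) 1,
          ENNReal.ofReal (t ^ (-(s * q.toReal))) * wLpE n p α (ballMeans n M f t) ^ q.toReal *
            ENNReal.ofReal t⁻¹) ^ (1 / q.toReal)

/-- Membership in the weighted Besov space `B^s_{p,q}(ℝ^n, |·|^α)`. -/
def MemBesov (n : ℕ) (p α s : ℝ) (q : ℝ≥0∞) (M : ℕ)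
    (f : EuclideanSpace ℝ (Fin n) → ℝ) : Prop :=
  Measurable f ∧ besovNorm n p α s q M f < ∞

/-! ### Averages on weighted Lebesgue spaces -/

/-- The Euclidean space `ℝ^n`. -/
abbrev En (n : ℕ) := EuclideanSpace ℝ (Fin n)

/-- Unnormalised averages `∫_{|a| ≤ R} F (x + τ a) da`. -/
def avg (n : ℕ) (R τ : ℝ) (F : En n → ℝ≥0∞) (x : En n) : ℝ≥0∞ :=
  ∫⁻ a in Metric.closedBall (0 : En n) R, F (x + τ • a)

lemma wLpE_eq (n : ℕ) {p α : ℝ} (hp : 1 < p) (F : En n → ℝ≥0∞) :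
    wLpE n p α F = (∫⁻ x, (F x * (‖x‖₊ : ℝ≥0∞) ^ (α / p)) ^ p) ^ (1 / p) := by
  unfold wLpE
  congr 2
  funext x
  rw [ENNReal.mul_rpow_of_nonneg _ _ (by linarith), ← ENNReal.rpow_mul,
    div_mul_cancel₀ _ (by linarith)]

lemma wLpE_mono_ae (n : ℕ) {p α : ℝ} (hp : 1 < p) {F G : En n → ℝ≥0∞}
    (h : ∀ᵐ x, F x ≤ G x) : wLpE n p α F ≤ wLpE n p α G := by
  unfold wLpE
  refine ENNReal.rpow_le_rpow (lintegral_mono_ae ?_) (by positivity)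
  filter_upwards [h] with x hx
  gcongr

lemma wLpE_mono (n : ℕ) {p α : ℝ} (hp : 1 < p) {F G : En n → ℝ≥0∞}
    (h : ∀ x, F x ≤ G x) : wLpE n p α F ≤ wLpE n p α G :=
  wLpE_mono_ae n hp (ae_of_all _ h)

lemma wLpE_add_le (n : ℕ) {p α : ℝ} (hp : 1 < p) {F G : En n → ℝ≥0∞}
    (hF : Measurable F) (hG : Measurable G) :
    wLpE n p α (fun x => F x + G x) ≤ wLpE n p α F + wLpE n p α G := by
  simp only [wLpE_eq n hp]
  have := ENNReal.lintegral_Lp_add_le (μ := volume) (p := p)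
    (f := fun x : En n => F x * (‖x‖₊ : ℝ≥0∞) ^ (α / p))
    (g := fun x : En n => G x * (‖x‖₊ : ℝ≥0∞) ^ (α / p)) (by fun_prop) (by fun_prop) hp.le
  simpa only [Pi.add_apply, ← add_mul] using this

lemma wLpE_const_mul (n : ℕ) {p α : ℝ} (hp : 1 < p) (c : ℝ≥0∞) {F : En n → ℝ≥0∞}
    (hF : Measurable F) :
    wLpE n p α (fun x => c * F x) = c * wLpE n p α F := by
  unfold wLpE
  have hp0 : 0 < p := by linarith
  simp only [ENNReal.mul_rpow_of_nonneg _ _ hp0.le, mul_assoc]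
  rw [lintegral_const_mul _ (by fun_prop), ENNReal.mul_rpow_of_nonneg _ _ (by positivity),
    ← ENNReal.rpow_mul, mul_one_div_cancel hp0.ne', ENNReal.rpow_one]

lemma wLpE_zero (n : ℕ) {p α : ℝ} (hp : 1 < p) : wLpE n p α (fun _ => 0) = 0 := by
  have hp0 : 0 < p := by linarith
  simp [wLpE, hp0]

lemma wLpE_sum_le (n : ℕ) {p α : ℝ} (hp : 1 < p) {ι : Type*} (s : Finset ι)
    {F : ι → En n → ℝ≥0∞} (hF : ∀ i, Measurable (F i)) :
    wLpE n p α (fun x => ∑ i ∈ s, F i x) ≤ ∑ i ∈ s, wLpE n p α (F i) := by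
  classical
  induction s using Finset.induction_on with
  | empty => simp [wLpE_zero n hp]
  | insert a s ha ih =>
    simp only [Finset.sum_insert ha]
    refine (wLpE_add_le n hp (hF a) (by fun_prop)).trans ?_
    gcongr

@[fun_prop]
lemma measurable_avg {n : ℕ} (R τ : ℝ) {F : En n → ℝ≥0∞} (hF : Measurable F) :
    Measurable (avg n R τ F) := by
  unfold avg
  exact Measurable.lintegral_prod_right' (f := fun z : En n × En n => F (z.1 + τ • z.2))
    (by fun_prop)

lemma lintegral_comp_affine {n : ℕ} {τ : ℝ} (hτ : 0 < τ) (x : En n) {G : En n → ℝ≥0∞}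
    (hG : Measurable G) :
    ∫⁻ a, G (x + τ • a) = ENNReal.ofReal τ ^ (-(n : ℝ)) * ∫⁻ y, G y := by
  have h1 : ∫⁻ a, G (x + τ • a) = ∫⁻ y, G (x + y) ∂(Measure.map (τ • ·) (volume : Measure (En n))) := by
    rw [lintegral_map (by fun_prop) (by fun_prop)]
  rw [h1, Measure.map_addHaar_smul _ hτ.ne', lintegral_smul_measure, lintegral_add_left_eq_self]
  congr 1
  rw [finrank_euclideanSpace_fin, abs_of_pos (by positivity), ENNReal.ofReal_rpow_of_pos hτ,
    Real.rpow_neg hτ.le, Real.rpow_natCast]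

/-- Local integrability of `|x|^{-β}` for `β < n`, uniformly over all balls of radius `R`. -/
lemma lintegral_sing (n : ℕ) (hn : 1 ≤ n) {β : ℝ} (hβ0 : 0 ≤ β) (hβ : β < n) (R : ℝ) :
    ∃ C : ℝ≥0∞, C ≠ ∞ ∧ ∀ z : En n,
      ∫⁻ a in Metric.closedBall (0 : En n) R, (‖z + a‖₊ : ℝ≥0∞) ^ (-β) ≤ C := by
  have hintg : IntegrableOn (fun x : En n => ‖x‖ ^ (-β)) (Metric.ball 0 1) := by
    refine integrableOn_ball_of_norm_le_rpow (C := 1) (α := β) (by simpa using hn)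
      (by simpa using hβ) (ae_of_all _ fun x => ?_)
      (measurable_norm.pow_const _).aestronglyMeasurable
    rw [one_mul, Real.norm_of_nonneg (by positivity)]
  have : Nontrivial (En n) := by
    apply Module.nontrivial_of_finrank_pos (R := ℝ)
    simp; omega
  have hfin : ∫⁻ x in Metric.ball (0 : En n) 1, (‖x‖₊ : ℝ≥0∞) ^ (-β) ≠ ∞ := by
    have h := hintg.2
    rw [hasFiniteIntegral_iff_enorm] at h
    refine ne_of_lt (lt_of_le_of_lt (le_of_eq ?_) h)
    refine lintegral_congr_ae (ae_restrict_of_ae ?_)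
    filter_upwards [Measure.ae_ne volume (0 : En n)] with x hx
    rw [Real.enorm_of_nonneg (by positivity), ← ENNReal.ofReal_rpow_of_pos (by positivity),
      ofReal_norm]
    rfl
  refine ⟨(∫⁻ x in Metric.ball (0 : En n) 1, (‖x‖₊ : ℝ≥0∞) ^ (-β)) +
    volume (Metric.closedBall (0 : En n) R), ?_, fun z => ?_⟩
  · exact ENNReal.add_ne_top.2 ⟨hfin, measure_closedBall_lt_top.ne⟩
  have hpt : ∀ y : En n, (‖y‖₊ : ℝ≥0∞) ^ (-β) ≤
      (Metric.ball (0 : En n) 1).indicator (fun x => (‖x‖₊ : ℝ≥0∞) ^ (-β)) y + 1 := by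
    intro y
    by_cases hy : y ∈ Metric.ball (0 : En n) 1
    · simp [Set.indicator_of_mem hy]
    · rw [Set.indicator_of_notMem hy, zero_add]
      simp only [Metric.mem_ball, dist_zero_right, not_lt] at hy
      rw [ENNReal.rpow_neg]
      refine ENNReal.inv_le_one.2 ?_
      rw [← ENNReal.one_rpow β]
      refine ENNReal.rpow_le_rpow ?_ hβ0
      exact_mod_cast hy
  calc _ ≤ ∫⁻ a in Metric.closedBall (0 : En n) R,
        ((Metric.ball (0 : En n) 1).indicator (fun x => (‖x‖₊ : ℝ≥0∞) ^ (-β)) (z + a) + 1) :=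
        lintegral_mono fun a => hpt _
    _ = (∫⁻ a in Metric.closedBall (0 : En n) R,
        ((Metric.ball (0 : En n) 1).indicator (fun x => (‖x‖₊ : ℝ≥0∞) ^ (-β)) (z + a))) +
        volume (Metric.closedBall (0 : En n) R) := by
        rw [lintegral_add_right _ measurable_const]; simp
    _ ≤ _ := by
        refine add_le_add_left ?_ _
        calc _ ≤ ∫⁻ a,
              ((Metric.ball (0 : En n) 1).indicator (fun x => (‖x‖₊ : ℝ≥0∞) ^ (-β)) (z + a)) :=
              setLIntegral_le_lintegral _ _
          _ = _ := by
            rw [lintegral_add_left_eq_self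
              (fun a => (Metric.ball (0 : En n) 1).indicator (fun x => (‖x‖₊ : ℝ≥0∞) ^ (-β)) a) z,
              lintegral_indicator measurableSet_ball]

/-- Averages at scale `τ` map `L^p(|·|^α)` to `L^∞` with norm `O(τ^{-(n+α)/p})`. This is Hölder's
inequality; the dual weight `|x|^{-α/(p-1)}` is locally integrable because `α < n(p-1)`. -/
lemma avg_le_sup (n : ℕ) (hn : 1 ≤ n) {p α : ℝ} (hp : 1 < p) (hα0 : 0 ≤ α)
    (hα : α < n * (p - 1)) (R : ℝ) :
    ∃ C : ℝ≥0∞, C ≠ ∞ ∧ ∀ τ : ℝ, 0 < τ → ∀ F : En n → ℝ≥0∞, Measurable F → ∀ x,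
      avg n R τ F x ≤ C * ENNReal.ofReal τ ^ (-((n + α) / p)) * wLpE n p α F := by
  have hp0 : 0 < p := by linarith
  have hp1 : 0 < p - 1 := by linarith
  have : Nontrivial (En n) := by
    apply Module.nontrivial_of_finrank_pos (R := ℝ)
    simp; omega
  obtain ⟨C, hC, hCb⟩ := lintegral_sing n hn (β := α / (p - 1)) (by positivity)
    (by rw [div_lt_iff₀ hp1]; exact hα) R
  have hconj : p.HolderConjugate (p / (p - 1)) := Real.HolderConjugate.conjExponent hp
  set q := p / (p - 1) with hq
  have hq0 : 0 < q := by positivity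
  refine ⟨C ^ (1 / q), ENNReal.rpow_ne_top_of_nonneg (by positivity) hC, fun τ hτ F hF x => ?_⟩
  have hT0 : ENNReal.ofReal τ ≠ 0 := by simpa using hτ
  have hae : ∀ᵐ a : En n, x + τ • a ≠ 0 := by
    filter_upwards [Measure.ae_ne volume (-(τ⁻¹ • x))] with a ha h
    apply ha
    rw [add_comm, ← eq_neg_iff_add_eq_zero] at h
    rw [← smul_right_inj hτ.ne', h, smul_neg, smul_inv_smul₀ hτ.ne']
  calc avg n R τ F x = ∫⁻ a in Metric.closedBall (0 : En n) R,
        ((fun a => F (x + τ • a) * (‖x + τ • a‖₊ : ℝ≥0∞) ^ (α / p)) *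
          (fun a => (‖x + τ • a‖₊ : ℝ≥0∞) ^ (-(α / p)))) a := by
        refine lintegral_congr_ae (ae_restrict_of_ae ?_)
        filter_upwards [hae] with a ha
        simp only [Pi.mul_apply]
        rw [mul_assoc, ← ENNReal.rpow_add _ _ (by simpa using ha) (by simp)]
        simp
    _ ≤ (∫⁻ a in Metric.closedBall (0 : En n) R,
          (F (x + τ • a) * (‖x + τ • a‖₊ : ℝ≥0∞) ^ (α / p)) ^ p) ^ (1 / p) *
        (∫⁻ a in Metric.closedBall (0 : En n) R,
          ((‖x + τ • a‖₊ : ℝ≥0∞) ^ (-(α / p))) ^ q) ^ (1 / q) :=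
        ENNReal.lintegral_mul_le_Lp_mul_Lq _ hconj (by fun_prop) (by fun_prop)
    _ ≤ (ENNReal.ofReal τ ^ (-(n : ℝ)) *
          ∫⁻ y, (F y * (‖y‖₊ : ℝ≥0∞) ^ (α / p)) ^ p) ^ (1 / p) *
        (ENNReal.ofReal τ ^ (-(α / (p - 1))) * C) ^ (1 / q) := by
        gcongr
        · rw [← lintegral_comp_affine hτ x (by fun_prop)]
          exact setLIntegral_le_lintegral _ _
        · calc _ = ∫⁻ a in Metric.closedBall (0 : En n) R, ENNReal.ofReal τ ^ (-(α / (p - 1))) *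
                (‖τ⁻¹ • x + a‖₊ : ℝ≥0∞) ^ (-(α / (p - 1))) := by
                refine lintegral_congr_ae (ae_restrict_of_ae ?_)
                filter_upwards [hae] with a ha
                have e : x + τ • a = τ • (τ⁻¹ • x + a) := by
                  rw [smul_add, smul_inv_smul₀ hτ.ne']
                have e2 : (‖x + τ • a‖₊ : ℝ≥0∞) =
                    ENNReal.ofReal τ * (‖τ⁻¹ • x + a‖₊ : ℝ≥0∞) := by
                  rw [e, nnnorm_smul, ENNReal.coe_mul, ENNReal.ofReal,
                    ← Real.toNNReal_eq_nnnorm_of_nonneg hτ.le]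
                rw [← ENNReal.rpow_mul, e2, ENNReal.mul_rpow_of_ne_top (by simp) (by simp)]
                have : -(α / p) * q = -(α / (p - 1)) := by
                  rw [hq]; field_simp
                rw [this]
            _ = ENNReal.ofReal τ ^ (-(α / (p - 1))) * ∫⁻ a in Metric.closedBall (0 : En n) R,
                (‖τ⁻¹ • x + a‖₊ : ℝ≥0∞) ^ (-(α / (p - 1))) := by
                rw [lintegral_const_mul _ (by fun_prop)]
            _ ≤ _ := by gcongr; exact hCb _
    _ = _ := by
        rw [wLpE_eq n hp, ENNReal.mul_rpow_of_nonneg _ _ (by positivity),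
          ENNReal.mul_rpow_of_nonneg _ _ (by positivity), ← ENNReal.rpow_mul, ← ENNReal.rpow_mul]
        have : -((n + α) / p) = -(n : ℝ) * (1 / p) + -(α / (p - 1)) * (1 / q) := by
          rw [hq]; field_simp; ring
        rw [this, ENNReal.rpow_add _ _ hT0 (by simp)]
        ring

/-- Hölder's inequality on the ball, followed by Tonelli's theorem and translation invariance. -/
lemma avg_Lp_unweighted (n : ℕ) {p : ℝ} (hp : 1 < p) (R τ : ℝ) {G : En n → ℝ≥0∞}
    (hG : Measurable G) :
    (∫⁻ x, avg n R τ G x ^ p) ^ (1 / p) ≤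
      volume (Metric.closedBall (0 : En n) R) * (∫⁻ x, G x ^ p) ^ (1 / p) := by
  have hp0 : 0 < p := by linarith
  have hp1 : 0 < p - 1 := by linarith
  set V := volume (Metric.closedBall (0 : En n) R) with hV
  have hconj : p.HolderConjugate (p / (p - 1)) := Real.HolderConjugate.conjExponent hp
  set q := p / (p - 1) with hq
  have hJ : ∀ x, avg n R τ G x ^ p ≤
      V ^ (p - 1) * ∫⁻ a in Metric.closedBall (0 : En n) R, G (x + τ • a) ^ p := by
    intro x
    have h := ENNReal.lintegral_mul_le_Lp_mul_Lq
      (volume.restrict (Metric.closedBall (0 : En n) R)) hconj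
      (f := fun a => G (x + τ • a)) (g := fun _ => 1) (by fun_prop) (by fun_prop)
    have h2 := ENNReal.rpow_le_rpow h hp0.le
    rw [ENNReal.mul_rpow_of_nonneg _ _ hp0.le, ← ENNReal.rpow_mul, ← ENNReal.rpow_mul,
      one_div_mul_cancel hp0.ne', ENNReal.rpow_one] at h2
    have e : 1 / q * p = p - 1 := by rw [hq]; field_simp
    rw [e] at h2
    simpa [avg, mul_comm] using h2
  calc (∫⁻ x, avg n R τ G x ^ p) ^ (1 / p)
      ≤ (∫⁻ x, V ^ (p - 1) *
          ∫⁻ a in Metric.closedBall (0 : En n) R, G (x + τ • a) ^ p) ^ (1 / p) := by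
        gcongr with x
        exact hJ x
    _ = (V ^ (p - 1) * (V * ∫⁻ x, G x ^ p)) ^ (1 / p) := by
        rw [lintegral_const_mul, lintegral_lintegral_swap]
        · congr 2
          have : ∀ a : En n, ∫⁻ x, G (x + τ • a) ^ p = ∫⁻ x, G x ^ p := fun a =>
            lintegral_add_right_eq_self (fun x => G x ^ p) _
          simp_rw [this]
          simp [hV, mul_comm]
        · exact Measurable.aemeasurable (by simp only [Function.uncurry_def]; fun_prop)
        · exact Measurable.lintegral_prod_right'
            (f := fun z : En n × En n => G (z.1 + τ • z.2) ^ p) (by fun_prop)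
    _ = _ := by
        have : V ^ (p - 1) * (V * ∫⁻ x, G x ^ p) = V ^ p * ∫⁻ x, G x ^ p := by
          rw [← mul_assoc]
          congr 1
          nth_rewrite 2 [← ENNReal.rpow_one V]
          rw [← ENNReal.rpow_add_of_nonneg _ _ hp1.le zero_le_one]
          simp
        rw [this, ENNReal.mul_rpow_of_nonneg _ _ (by positivity), ← ENNReal.rpow_mul,
          mul_one_div_cancel hp0.ne', ENNReal.rpow_one]

/-- Averages are bounded on `L^p(|·|^α)`, uniformly in the scale. Where `|x| ≥ 2Rτ` the weight at `x`
is at most `2^α` times the weight at `x + τ a`, which reduces to the unweighted bound; on the ball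
of radius `2Rτ` the sup bound `avg_le_sup` suffices. -/
lemma avg_Lp (n : ℕ) (hn : 1 ≤ n) {p α : ℝ} (hp : 1 < p) (hα0 : 0 ≤ α)
    (hα : α < n * (p - 1)) {R : ℝ} (hR : 0 ≤ R) :
    ∃ C : ℝ≥0∞, C ≠ ∞ ∧ ∀ τ : ℝ, 0 < τ → ∀ F : En n → ℝ≥0∞, Measurable F →
      wLpE n p α (avg n R τ F) ≤ C * wLpE n p α F := by
  have hp0 : 0 < p := by linarith
  obtain ⟨C, hC, hCb⟩ := avg_le_sup n hn hp hα0 hα R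
  set V := volume (Metric.closedBall (0 : En n) R) with hV
  set V2 := volume (Metric.ball (0 : En n) (2 * R)) with hV2
  refine ⟨2 ^ (α / p) * V + ENNReal.ofReal (2 * R) ^ (α / p) * C * V2 ^ (1 / p), ?_, ?_⟩
  · have h1 : V ≠ ∞ := measure_closedBall_lt_top.ne
    have h2 : V2 ^ (1 / p) ≠ ∞ :=
      ENNReal.rpow_ne_top_of_nonneg (by positivity) measure_ball_lt_top.ne
    have h3 : ENNReal.ofReal (2 * R) ^ (α / p) ≠ ∞ :=
      ENNReal.rpow_ne_top_of_nonneg (by positivity) ENNReal.ofReal_ne_top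
    have h4 : (2 : ℝ≥0∞) ^ (α / p) ≠ ∞ :=
      ENNReal.rpow_ne_top_of_nonneg (by positivity) (by simp)
    finiteness
  intro τ hτ F hF
  have hT0 : ENNReal.ofReal τ ≠ 0 := by simpa using hτ
  set W := wLpE n p α F with hW
  set H : En n → ℝ≥0∞ := fun y => F y * (‖y‖₊ : ℝ≥0∞) ^ (α / p) with hH
  have hHm : Measurable H := by fun_prop
  set c : ℝ≥0∞ := ENNReal.ofReal (2 * R) ^ (α / p) * C * ENNReal.ofReal τ ^ (-(n / p)) * W
  have hpt : ∀ x, avg n R τ F x * (‖x‖₊ : ℝ≥0∞) ^ (α / p) ≤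
      2 ^ (α / p) * avg n R τ H x + (Metric.ball (0 : En n) (2 * R * τ)).indicator (fun _ => c) x := by
    intro x
    by_cases hx : x ∈ Metric.ball (0 : En n) (2 * R * τ)
    · rw [Set.indicator_of_mem hx]
      refine le_add_left ?_
      have hx' : ‖x‖ ≤ 2 * R * τ := by
        rw [mem_ball_zero_iff] at hx; exact hx.le
      have hx2 : (‖x‖₊ : ℝ≥0∞) ≤ ENNReal.ofReal (2 * R) * ENNReal.ofReal τ := by
        rw [← ENNReal.ofReal_mul (by positivity)]
        have : (‖x‖₊ : ℝ≥0∞) = ENNReal.ofReal ‖x‖ := by rw [ofReal_norm]; rfl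
        rw [this]
        exact ENNReal.ofReal_le_ofReal hx'
      calc _ ≤ (C * ENNReal.ofReal τ ^ (-((n + α) / p)) * W) *
            (ENNReal.ofReal (2 * R) * ENNReal.ofReal τ) ^ (α / p) := by
              gcongr
              exact hCb τ hτ F hF x
        _ = c := by
            rw [ENNReal.mul_rpow_of_nonneg _ _ (by positivity)]
            have : -(n / p) = -((n + α) / p) + α / p := by ring
            simp only [c]
            rw [this, ENNReal.rpow_add _ _ hT0 (by simp)]
            ring
    · refine le_add_right ?_
      simp only [mem_ball_zero_iff, not_lt] at hx
      unfold avg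
      rw [← lintegral_const_mul _ (by fun_prop), ← lintegral_mul_const _ (by fun_prop)]
      refine setLIntegral_mono (by fun_prop) fun a ha => ?_
      rw [mem_closedBall_zero_iff] at ha
      have h2 : ‖x‖ ≤ 2 * ‖x + τ • a‖ := by
        have h3 : ‖x‖ ≤ ‖x + τ • a‖ + ‖τ • a‖ := by
          calc ‖x‖ = ‖(x + τ • a) - τ • a‖ := by simp
            _ ≤ _ := norm_sub_le _ _
        rw [norm_smul, Real.norm_of_nonneg hτ.le] at h3
        nlinarith
      have h4 : (‖x‖₊ : ℝ≥0∞) ≤ 2 * (‖x + τ • a‖₊ : ℝ≥0∞) := by exact_mod_cast h2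
      calc _ ≤ F (x + τ • a) * (2 * (‖x + τ • a‖₊ : ℝ≥0∞)) ^ (α / p) := by gcongr
        _ = _ := by
          rw [ENNReal.mul_rpow_of_nonneg _ _ (by positivity)]
          simp only [hH]
          ring
  have hballm : Measurable ((Metric.ball (0 : En n) (2 * R * τ)).indicator (fun _ => c)) :=
    measurable_const.indicator measurableSet_ball
  rw [wLpE_eq n hp]
  calc _ ≤ (∫⁻ x, ((fun x => 2 ^ (α / p) * avg n R τ H x) +
          (Metric.ball (0 : En n) (2 * R * τ)).indicator (fun _ => c)) x ^ p) ^ (1 / p) := by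
        gcongr with x
        exact hpt x
    _ ≤ (∫⁻ x, (2 ^ (α / p) * avg n R τ H x) ^ p) ^ (1 / p) +
        (∫⁻ x, ((Metric.ball (0 : En n) (2 * R * τ)).indicator (fun _ => c) x) ^ p) ^ (1 / p) :=
        ENNReal.lintegral_Lp_add_le (by fun_prop) hballm.aemeasurable hp.le
    _ ≤ 2 ^ (α / p) * (V * W) + c * (V2 ^ (1 / p) * ENNReal.ofReal τ ^ (n / p)) := by
        gcongr
        · simp only [ENNReal.mul_rpow_of_nonneg _ _ hp0.le]
          rw [lintegral_const_mul _ (by fun_prop), ENNReal.mul_rpow_of_nonneg _ _ (by positivity),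
            ← ENNReal.rpow_mul _ p, mul_one_div_cancel hp0.ne', ENNReal.rpow_one, hW, wLpE_eq n hp]
          gcongr
          exact avg_Lp_unweighted n hp R τ hHm
        · have e : ∀ x, ((Metric.ball (0 : En n) (2 * R * τ)).indicator (fun _ => c) x) ^ p =
              (Metric.ball (0 : En n) (2 * R * τ)).indicator (fun _ => c ^ p) x := by
            intro x
            by_cases hx : x ∈ Metric.ball (0 : En n) (2 * R * τ)
            · simp only [Set.indicator_of_mem hx]
            · simp only [Set.indicator_of_notMem hx, ENNReal.zero_rpow_of_pos hp0]
          simp_rw [e]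
          rw [lintegral_indicator measurableSet_ball, setLIntegral_const,
            ENNReal.mul_rpow_of_nonneg _ _ (by positivity), ← ENNReal.rpow_mul,
            mul_one_div_cancel hp0.ne', ENNReal.rpow_one]
          gcongr
          have hv : volume (Metric.ball (0 : En n) (2 * R * τ)) =
              V2 * ENNReal.ofReal τ ^ (n : ℝ) := by
            rw [mul_comm (2 * R), Measure.addHaar_ball_mul_of_pos _ _ hτ, finrank_euclideanSpace_fin, hV2,
              mul_comm, ENNReal.ofReal_pow hτ.le, ENNReal.rpow_natCast]
          rw [hv, ENNReal.mul_rpow_of_nonneg _ _ (by positivity), ← ENNReal.rpow_mul,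
            mul_one_div]
    _ = _ := by
        have : ENNReal.ofReal τ ^ (-(n / p)) * ENNReal.ofReal τ ^ (n / p) = 1 := by
          rw [← ENNReal.rpow_add _ _ hT0 (by simp)]; simp
        calc _ = 2 ^ (α / p) * (V * W) + ENNReal.ofReal (2 * R) ^ (α / p) * C * W * V2 ^ (1 / p) *
              (ENNReal.ofReal τ ^ (-(n / p)) * ENNReal.ofReal τ ^ (n / p)) := by
              simp only [c]; ring
          _ = _ := by rw [this]; ring

/-! ### Smoothing kernels -/

section

/-- `T_{K,τ} f (x) = ∫ K(a) f (x + τ a) da`. -/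
def kconv (n : ℕ) (K : En n → ℝ) (τ : ℝ) (f : En n → ℝ) (x : En n) : ℝ :=
  ∫ a, K a * f (x + τ • a)

/-- Smooth kernels vanishing outside the closed ball of radius `R`. -/
structure IsKer (n : ℕ) (R : ℝ) (K : En n → ℝ) : Prop where
  smooth : ContDiff ℝ (⊤ : ℕ∞) K
  supp : ∀ a, R < ‖a‖ → K a = 0

/-- Uniform local integrability: `f` is measurable and, at every scale, the averages of `|f|` are
bounded uniformly in the centre. All smoothings of such an `f` are then absolutely convergent. -/
structure ULI (n : ℕ) (f : En n → ℝ) : Prop where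
  meas : Measurable f
  bdd : ∀ R τ : ℝ, 0 < τ → ∃ C : ℝ≥0∞, C ≠ ∞ ∧ ∀ x, avg n R τ (fun y => ‖f y‖ₑ) x ≤ C

section fd
variable {V : Type} [NormedAddCommGroup V] [NormedSpace ℝ V]

/-- Differentiation commutes with iterated differences. -/
lemma hasFDerivAt_fwdDiff_iter {W : Type} [NormedAddCommGroup W] [NormedSpace ℝ W] (M : ℕ) (k : V)
    (Θ : V → W) (Θ' : V → V →L[ℝ] W) (h : ∀ v, HasFDerivAt Θ (Θ' v) v) (v : V) :
    HasFDerivAt ((fwdDiff k)^[M] Θ) ((fwdDiff k)^[M] Θ' v) v := by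
  induction M generalizing v with
  | zero => exact h v
  | succ M ih =>
    simp only [Function.iterate_succ_apply']
    unfold fwdDiff
    exact ((hasFDerivAt_comp_add_right k).2 (ih (v + k))).sub (ih v)

/-- The `M`-th differences of a test function with step `k` are `O(|k|^M)`. The induction on `M`
applies the mean value inequality to the `M`-th difference and the bound for `M` to the derivative,
which is why the target space `W` is arbitrary. -/
lemma fwdDiff_iter_bound (M : ℕ) : ∀ {W : Type} [NormedAddCommGroup W] [NormedSpace ℝ W]
    (Θ : V → W), ContDiff ℝ (⊤ : ℕ∞) Θ → HasCompactSupport Θ →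
    ∃ C : ℝ, 0 ≤ C ∧ ∀ k v, ‖(fwdDiff k)^[M] Θ v‖ ≤ C * ‖k‖ ^ M := by
  induction M with
  | zero =>
    intro W _ _ Θ hΘ hc
    obtain ⟨C, hC⟩ := hc.exists_bound_of_continuous hΘ.continuous
    refine ⟨|C|, abs_nonneg _, fun k v => ?_⟩
    simpa using (hC v).trans (le_abs_self C)
  | succ M ih =>
    intro W _ _ Θ hΘ hc
    obtain ⟨C, hC0, hC⟩ := ih (fderiv ℝ Θ) (hΘ.fderiv_right (by simp)) (hc.fderiv ℝ)
    refine ⟨C, hC0, fun k v => ?_⟩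
    have hd : ∀ v, HasFDerivAt Θ (fderiv ℝ Θ v) v := fun v =>
      (hΘ.differentiable (by simp) v).hasFDerivAt
    have hd2 := hasFDerivAt_fwdDiff_iter M k Θ _ hd
    rw [Function.iterate_succ_apply']
    have := (convex_univ (𝕜 := ℝ) (E := V)).norm_image_sub_le_of_norm_hasFDerivWithin_le
      (f := (fwdDiff k)^[M] Θ) (C := C * ‖k‖ ^ M) (x := v) (y := v + k)
      (fun x _ => (hd2 x).hasFDerivWithinAt) (fun x _ => hC k x) trivial trivial
    simpa [fwdDiff, pow_succ, mul_assoc] using this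

end fd

variable {n : ℕ}

lemma IsKer.hasCompactSupport {R : ℝ} {K : En n → ℝ} (hK : IsKer n R K) : HasCompactSupport K :=
  HasCompactSupport.intro (isCompact_closedBall (0 : En n) R) fun x hx => hK.supp x (by
    simpa using hx)

lemma IsKer.bound {R : ℝ} {K : En n → ℝ} (hK : IsKer n R K) :
    ∃ c : ℝ≥0∞, c ≠ ∞ ∧ ∀ a, ‖K a‖ₑ ≤ c := by
  obtain ⟨C, hC⟩ := hK.hasCompactSupport.exists_bound_of_continuous hK.smooth.continuous
  refine ⟨ENNReal.ofReal C, by simp, fun a => ?_⟩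
  rw [← ofReal_norm]
  exact ENNReal.ofReal_le_ofReal (hC a)

lemma IsKer.mono {R R' : ℝ} {K : En n → ℝ} (hK : IsKer n R K) (h : R ≤ R') : IsKer n R' K :=
  ⟨hK.smooth, fun a ha => hK.supp a (h.trans_lt ha)⟩

lemma IsKer.add {R : ℝ} {K L : En n → ℝ} (hK : IsKer n R K) (hL : IsKer n R L) :
    IsKer n R (fun a => K a + L a) :=
  ⟨hK.smooth.add hL.smooth, fun a ha => by simp [hK.supp a ha, hL.supp a ha]⟩

lemma lintegral_ker_le {R τ : ℝ} {K : En n → ℝ} (hs : ∀ a, R < ‖a‖ → K a = 0) {c : ℝ≥0∞}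
    (hc : ∀ a, ‖K a‖ₑ ≤ c) {f : En n → ℝ} (hf : Measurable f) (x : En n) :
    ∫⁻ a, ‖K a * f (x + τ • a)‖ₑ ≤ c * avg n R τ (fun y => ‖f y‖ₑ) x := by
  unfold avg
  rw [← lintegral_const_mul _ (by fun_prop), ← lintegral_indicator Metric.isClosed_closedBall.measurableSet]
  refine lintegral_mono fun a => ?_
  by_cases ha : a ∈ Metric.closedBall (0 : En n) R
  · rw [Set.indicator_of_mem ha, enorm_mul]
    gcongr
    exact hc a
  · rw [hs a (by simpa using ha)]; simp

lemma integrable_ker {R τ : ℝ} {K : En n → ℝ} (hm : Measurable K)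
    (hs : ∀ a, R < ‖a‖ → K a = 0) {c : ℝ≥0∞} (hc' : c ≠ ∞)
    (hc : ∀ a, ‖K a‖ₑ ≤ c) {f : En n → ℝ} (hf : Measurable f) {x : En n}
    (hx : avg n R τ (fun y => ‖f y‖ₑ) x ≠ ∞) :
    Integrable (fun a => K a * f (x + τ • a)) := by
  refine ⟨Measurable.aestronglyMeasurable (by fun_prop), ?_⟩
  rw [hasFiniteIntegral_iff_enorm]
  exact (lintegral_ker_le hs hc hf x).trans_lt (ENNReal.mul_lt_top hc'.lt_top hx.lt_top)

lemma ULI.avg_ne_top {f : En n → ℝ} (hf : ULI n f) (R : ℝ) {τ : ℝ} (hτ : 0 < τ) (x : En n) :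
    avg n R τ (fun y => ‖f y‖ₑ) x ≠ ∞ := by
  obtain ⟨C, hC, h⟩ := hf.bdd R τ hτ
  exact ne_top_of_le_ne_top hC (h x)

lemma IsKer.integrable {R τ : ℝ} (hτ : 0 < τ) {K : En n → ℝ} (hK : IsKer n R K) {f : En n → ℝ}
    (hf : ULI n f) (x : En n) : Integrable (fun a => K a * f (x + τ • a)) := by
  obtain ⟨c, hc, h⟩ := hK.bound
  exact integrable_ker hK.smooth.continuous.measurable hK.supp hc h hf.meas (hf.avg_ne_top R hτ x)

lemma enorm_kconv_le {R : ℝ} {K : En n → ℝ} (hK : IsKer n R K) :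
    ∃ c : ℝ≥0∞, c ≠ ∞ ∧ ∀ τ (f : En n → ℝ), Measurable f → ∀ x,
      ‖kconv n K τ f x‖ₑ ≤ c * avg n R τ (fun y => ‖f y‖ₑ) x := by
  obtain ⟨c, hc, h⟩ := hK.bound
  exact ⟨c, hc, fun τ f hf x => (enorm_integral_le_lintegral_enorm _).trans
    (lintegral_ker_le hK.supp h hf x)⟩

lemma measurable_kconv {R : ℝ} {K : En n → ℝ} (hK : IsKer n R K) (τ : ℝ) {f : En n → ℝ}
    (hf : Measurable f) : Measurable (kconv n K τ f) := by
  unfold kconv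
  have hKm := hK.smooth.continuous.measurable
  have : StronglyMeasurable (fun z : En n × En n => K z.2 * f (z.1 + τ • z.2)) :=
    Measurable.stronglyMeasurable (by fun_prop)
  exact this.integral_prod_right'.measurable

lemma avg_le_of_le {R τ : ℝ} {F : En n → ℝ≥0∞} {B : ℝ≥0∞} (h : ∀ x, F x ≤ B) (x : En n) :
    avg n R τ F x ≤ B * volume (Metric.closedBall (0 : En n) R) := by
  unfold avg
  calc _ ≤ ∫⁻ a in Metric.closedBall (0 : En n) R, B := lintegral_mono fun a => h _
    _ = _ := by simp

lemma ULI.of_bdd {f : En n → ℝ} (hf : Measurable f) {B : ℝ≥0∞} (hB : B ≠ ∞)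
    (h : ∀ x, ‖f x‖ₑ ≤ B) : ULI n f :=
  ⟨hf, fun R _ _ => ⟨B * volume (Metric.closedBall (0 : En n) R),
    ENNReal.mul_ne_top hB measure_closedBall_lt_top.ne, fun x => avg_le_of_le h x⟩⟩

lemma ULI.kconv {R τ : ℝ} (hτ : 0 < τ) {K : En n → ℝ} (hK : IsKer n R K) {f : En n → ℝ}
    (hf : ULI n f) : ULI n (kconv n K τ f) := by
  obtain ⟨c, hc, h⟩ := enorm_kconv_le hK
  obtain ⟨C, hC, h2⟩ := hf.bdd R τ hτ
  refine ULI.of_bdd (measurable_kconv hK τ hf.meas) (ENNReal.mul_ne_top hc hC) fun x =>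
    (h τ f hf.meas x).trans ?_
  gcongr
  exact h2 x

lemma ULI.sub {f g : En n → ℝ} (hf : ULI n f) (hg : ULI n g) : ULI n (fun x => f x - g x) := by
  refine ⟨hf.meas.sub hg.meas, fun R τ hτ => ?_⟩
  obtain ⟨C, hC, h⟩ := hf.bdd R τ hτ
  obtain ⟨D, hD, h'⟩ := hg.bdd R τ hτ
  refine ⟨C + D, ENNReal.add_ne_top.2 ⟨hC, hD⟩, fun x => ?_⟩
  refine le_trans ?_ (add_le_add (h x) (h' x))
  have := hf.meas
  have := hg.meas
  unfold avg
  rw [← lintegral_add_left (by fun_prop)]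
  exact lintegral_mono fun a => enorm_sub_le

lemma kconv_sub {R τ : ℝ} (hτ : 0 < τ) {K : En n → ℝ} (hK : IsKer n R K) {f g : En n → ℝ}
    (hf : ULI n f) (hg : ULI n g) (x : En n) :
    kconv n K τ (fun y => f y - g y) x = kconv n K τ f x - kconv n K τ g x := by
  unfold kconv
  rw [← integral_sub (hK.integrable hτ hf x) (hK.integrable hτ hg x)]
  simp only [mul_sub]

lemma kconv_add_ker {R τ : ℝ} (hτ : 0 < τ) {K L : En n → ℝ} (hK : IsKer n R K) (hL : IsKer n R L)
    {f : En n → ℝ} (hf : ULI n f) (x : En n) :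
    kconv n (fun a => K a + L a) τ f x = kconv n K τ f x + kconv n L τ f x := by
  unfold kconv
  rw [← integral_add (hK.integrable hτ hf x) (hL.integrable hτ hf x)]
  simp only [add_mul]

/-- Smoothings commute, by Fubini and the commutativity of translations. -/
lemma kconv_comm {R τ : ℝ} (hτ : 0 < τ) {K L : En n → ℝ} (hK : IsKer n R K) (hL : IsKer n R L)
    {f : En n → ℝ} (hf : ULI n f) (x : En n) :
    kconv n K τ (kconv n L τ f) x = kconv n L τ (kconv n K τ f) x := by
  unfold kconv
  simp only [← integral_const_mul]
  obtain ⟨c, hc, h⟩ := hK.bound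
  obtain ⟨d, hd, h'⟩ := hL.bound
  obtain ⟨C, hC, h2⟩ := hf.bdd R τ hτ
  have hKm := hK.smooth.continuous.measurable
  have hLm := hL.smooth.continuous.measurable
  have hfm := hf.meas
  rw [integral_integral_swap]
  · congr 1
    funext b
    congr 1
    funext a
    rw [add_right_comm]
    ring
  · refine ⟨Measurable.aestronglyMeasurable (by simp only [Function.uncurry_def]; fun_prop), ?_⟩
    rw [hasFiniteIntegral_iff_enorm, lintegral_prod _ (Measurable.aemeasurable
      (by simp only [Function.uncurry_def]; fun_prop))]
    simp only [Function.uncurry_def, enorm_mul]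
    calc _ ≤ ∫⁻ a, ‖K a‖ₑ * (d * C) := by
          refine lintegral_mono fun a => ?_
          simp only [← enorm_mul]
          simp only [enorm_mul (K a)]
          rw [lintegral_const_mul _ (by fun_prop)]
          gcongr
          refine (lintegral_ker_le hL.supp h' hf.meas (x + τ • a)).trans ?_
          gcongr
          exact h2 _
      _ = (∫⁻ a, ‖K a‖ₑ) * (d * C) := by rw [lintegral_mul_const _ (by fun_prop)]
      _ < ∞ := by
          refine ENNReal.mul_lt_top ?_ (ENNReal.mul_lt_top hd.lt_top hC.lt_top)
          exact (hK.smooth.continuous.integrable_of_hasCompactSupport hK.hasCompactSupport).2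

/-- The kernel `2⁻ⁿ K(·/2)`, which turns the scale `τ` into `2 τ`. -/
def dblKer (n : ℕ) (K : En n → ℝ) (a : En n) : ℝ := (2 ^ n)⁻¹ * K ((2 : ℝ)⁻¹ • a)

lemma IsKer.dbl {R : ℝ} {K : En n → ℝ} (hK : IsKer n R K) : IsKer n (2 * R) (dblKer n K) := by
  refine ⟨contDiff_const.mul (hK.smooth.comp (contDiff_const_smul _)), fun a ha => ?_⟩
  rw [dblKer, hK.supp, mul_zero]
  rw [norm_smul]
  norm_num
  linarith

lemma kconv_dbl (K : En n → ℝ) (τ : ℝ) (f : En n → ℝ) (x : En n) :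
    kconv n (dblKer n K) τ f x = kconv n K (2 * τ) f x := by
  unfold kconv dblKer
  have := Measure.integral_comp_smul (volume : Measure (En n))
    (fun a => (2 ^ n)⁻¹ * K ((2 : ℝ)⁻¹ • a) * f (x + τ • a)) 2
  rw [finrank_euclideanSpace_fin, abs_of_pos (by positivity), smul_eq_mul,
    eq_comm, inv_mul_eq_iff_eq_mul₀ (by positivity)] at this
  rw [this, ← integral_const_mul]
  congr 1
  funext a
  rw [inv_smul_smul₀ (by norm_num), smul_smul, mul_comm τ 2]
  field_simp

end

/-! ### Bilinear difference estimate and the reproducing kernel -/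

section

variable {n : ℕ}

lemma kconv_shift {K : En n → ℝ} {τ : ℝ} (hτ : 0 < τ) (f : En n → ℝ) (x h : En n) :
    kconv n K τ f (x + h) = ∫ a, K (a - τ⁻¹ • h) * f (x + τ • a) := by
  unfold kconv
  rw [← integral_sub_right_eq_self (fun a => K a * f (x + h + τ • a)) (τ⁻¹ • h)]
  congr 1
  funext a
  congr 2
  rw [smul_sub, smul_inv_smul₀ hτ.ne']
  abel

/-- The product of two smoothings of `F` and `G` is the integral of `F ⊗ G` against the smooth tensor
kernel `K ⊗ L`. The differences in `x` therefore fall on that kernel, and each contributes a factor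
`|h|/τ`. -/
lemma iterDiff_mul_le {R : ℝ} {K L : En n → ℝ} (hK : IsKer n R K) (hL : IsKer n R L) (M : ℕ) :
    ∃ C : ℝ≥0∞, C ≠ ∞ ∧ ∀ τ : ℝ, 0 < τ → ∀ F G : En n → ℝ, ULI n F → ULI n G → ∀ h x : En n,
      ‖h‖ ≤ τ →
      ‖iterDiff n M (fun y => kconv n K τ F y * kconv n L τ G y) h x‖ₑ ≤
        C * ENNReal.ofReal (‖h‖ / τ) ^ M *
          (avg n (R + M) τ (fun y => ‖F y‖ₑ) x * avg n (R + M) τ (fun y => ‖G y‖ₑ) x) := by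
  set Θ : En n × En n → ℝ := fun z => K z.1 * L z.2 with hΘ
  have hΘs : ContDiff ℝ (⊤ : ℕ∞) Θ :=
    (hK.smooth.comp contDiff_fst).mul (hL.smooth.comp contDiff_snd)
  have hΘc : HasCompactSupport Θ := by
    refine HasCompactSupport.intro ((isCompact_closedBall (0 : En n) R).prod
      (isCompact_closedBall (0 : En n) R)) fun z hz => ?_
    rw [Set.mem_prod, not_and_or] at hz
    rcases hz with hz | hz
    · simp [hΘ, hK.supp z.1 (by simpa using hz)]
    · simp [hΘ, hL.supp z.2 (by simpa using hz)]
  obtain ⟨C, hC0, hC⟩ := fwdDiff_iter_bound M Θ hΘs hΘc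
  obtain ⟨c, hc, hKb⟩ := hK.bound
  obtain ⟨d, hd, hLb⟩ := hL.bound
  have hKm := hK.smooth.continuous.measurable
  have hLm := hL.smooth.continuous.measurable
  refine ⟨ENNReal.ofReal C, by simp, fun τ hτ F G hF hG h x hh => ?_⟩
  have hFm := hF.meas
  have hGm := hG.meas
  -- In the rescaled variables the step `h` becomes `k = h/τ`, acting diagonally on `K ⊗ L`.
  set k : En n := τ⁻¹ • h with hk
  have hknorm : ‖k‖ = ‖h‖ / τ := by
    rw [hk, norm_smul, Real.norm_of_nonneg (by positivity)]; ring
  have hk1 : ‖k‖ ≤ 1 := by rw [hknorm]; exact (div_le_one hτ).2 hh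
  have hsuppgen : ∀ {K : En n → ℝ}, IsKer n R K → ∀ i ∈ Finset.range (M + 1), ∀ a : En n,
      R + M < ‖a‖ → K (a - (i : ℝ) • k) = 0 := by
    intro K hK i hi a ha
    apply hK.supp
    have h1 : ‖(i : ℝ) • k‖ ≤ M := by
      rw [norm_smul]
      have : (i : ℝ) ≤ M := by exact_mod_cast Nat.lt_succ_iff.1 (Finset.mem_range.1 hi)
      simp only [RCLike.norm_natCast]
      nlinarith [norm_nonneg k]
    have h2 := norm_sub_norm_le a ((i : ℝ) • k)
    linarith
  set P : En n × En n → ℝ := fun z => F (x + τ • z.1) * G (x + τ • z.2) with hP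
  have hterm : ∀ i : ℕ, kconv n K τ F (x + (i : ℝ) • h) * kconv n L τ G (x + (i : ℝ) • h) =
      ∫ z : En n × En n, Θ (z + i • (-k, -k)) * P z := by
    intro i
    rw [kconv_shift hτ, kconv_shift hτ, ← integral_prod_mul]
    congr 1
    funext z
    rw [smul_comm τ⁻¹ (i : ℝ) h, ← hk]
    simp only [hΘ, hP, Prod.fst_add, Prod.snd_add, Prod.smul_fst, Prod.smul_snd, smul_neg,
      ← sub_eq_add_neg, Nat.cast_smul_eq_nsmul]
    ring
  have hintg : ∀ i ∈ Finset.range (M + 1), Integrable (fun z => Θ (z + i • (-k, -k)) * P z) := by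
    intro i hi
    have h1 := integrable_ker (K := fun a => K (a - (i : ℝ) • k)) (by fun_prop)
      (hsuppgen hK i hi) hc (fun a => hKb _) hFm (hF.avg_ne_top (R + M) hτ x)
    have h2 := integrable_ker (K := fun a => L (a - (i : ℝ) • k)) (by fun_prop)
      (hsuppgen hL i hi) hd (fun a => hLb _) hGm (hG.avg_ne_top (R + M) hτ x)
    refine (h1.mul_prod h2).congr (ae_of_all _ fun z => ?_)
    simp only [hΘ, hP, Prod.fst_add, Prod.snd_add, Prod.smul_fst, Prod.smul_snd, smul_neg,
      ← sub_eq_add_neg, Nat.cast_smul_eq_nsmul]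
    ring
  have hsum : ∀ z, (fwdDiff (-k, -k))^[M] Θ z = ∑ i ∈ Finset.range (M + 1),
      (-1 : ℝ) ^ (M - i) * (M.choose i : ℝ) * Θ (z + i • (-k, -k)) := by
    intro z
    rw [fwdDiff_iter_eq_sum_shift]
    refine Finset.sum_congr rfl fun i _ => ?_
    rw [zsmul_eq_mul]
    push_cast
    rfl
  have hrep : iterDiff n M (fun y => kconv n K τ F y * kconv n L τ G y) h x =
      ∫ z, (fwdDiff (-k, -k))^[M] Θ z * P z := by
    unfold iterDiff
    simp only [hterm, hsum, Finset.sum_mul, ← integral_const_mul]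
    rw [← integral_finsetSum]
    · simp only [mul_assoc]
    · intro i hi
      exact (hintg i hi).const_mul _
  have hzero : ∀ z, (z.1 ∉ Metric.closedBall (0 : En n) (R + M) ∨
      z.2 ∉ Metric.closedBall (0 : En n) (R + M)) → (fwdDiff (-k, -k))^[M] Θ z = 0 := by
    intro z hz
    rw [hsum]
    refine Finset.sum_eq_zero fun i hi => ?_
    simp only [hΘ, Prod.fst_add, Prod.snd_add, Prod.smul_fst, Prod.smul_snd, smul_neg,
      ← sub_eq_add_neg]
    simp only [← Nat.cast_smul_eq_nsmul ℝ]
    rcases hz with hz | hz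
    · rw [hsuppgen hK i hi z.1 (by simpa using hz)]; simp
    · rw [hsuppgen hL i hi z.2 (by simpa using hz)]; simp
  set S := Metric.closedBall (0 : En n) (R + M) with hS
  have hSm : MeasurableSet S := Metric.isClosed_closedBall.measurableSet
  have hFi : Measurable (S.indicator fun a => ‖F (x + τ • a)‖ₑ) :=
    Measurable.indicator (by fun_prop) hSm
  have hGi : Measurable (S.indicator fun a => ‖G (x + τ • a)‖ₑ) :=
    Measurable.indicator (by fun_prop) hSm
  rw [hrep]
  refine (enorm_integral_le_lintegral_enorm _).trans ?_
  calc ∫⁻ z, ‖(fwdDiff (-k, -k))^[M] Θ z * P z‖ₑ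
      ≤ ∫⁻ z : En n × En n, (ENNReal.ofReal C * ENNReal.ofReal (‖h‖ / τ) ^ M) *
        (S.indicator (fun a => ‖F (x + τ • a)‖ₑ) z.1 *
          S.indicator (fun a => ‖G (x + τ • a)‖ₑ) z.2) := by
        refine lintegral_mono fun z => ?_
        by_cases h1 : z.1 ∈ S
        · by_cases h2 : z.2 ∈ S
          · simp only [Set.indicator_of_mem h1, Set.indicator_of_mem h2]
            rw [enorm_mul]
            simp only [hP, enorm_mul]
            gcongr
            rw [← ofReal_norm, ← ENNReal.ofReal_pow (by positivity), ← ENNReal.ofReal_mul hC0]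
            refine ENNReal.ofReal_le_ofReal ((hC _ z).trans ?_)
            rw [← hknorm]
            simp [Prod.norm_def]
          · rw [hzero z (Or.inr h2)]; simp
        · rw [hzero z (Or.inl h1)]; simp
    _ = _ := by
        rw [lintegral_const_mul _ (by fun_prop)]
        congr 1
        rw [Measure.volume_eq_prod, lintegral_prod_mul hFi.aemeasurable hGi.aemeasurable,
          lintegral_indicator hSm, lintegral_indicator hSm]
        rfl

lemma measurable_iterDiff {M : ℕ} {f : En n → ℝ} (hf : Measurable f) :
    Measurable (fun z : En n × En n => iterDiff n M f z.2 z.1) := by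
  unfold iterDiff
  fun_prop

/-- Existence of a kernel reproducing every `f` up to its `M`-th ball means. Integrating the
expansion of `(-1)^M Δ_{τa}^M f(x)` against a bump `φ(a)` of integral one, the term `i = 0` gives
`f(x)`; the terms `i ≥ 1` are smoothings of `f` by dilates of `φ`, which together define `-K`. -/
lemma exists_ker (n M : ℕ) : ∃ (R : ℝ) (K : En n → ℝ), 0 ≤ R ∧ IsKer n R K ∧
    ∃ c : ℝ≥0∞, c ≠ ∞ ∧ ∀ f : En n → ℝ, ULI n f → ∀ τ : ℝ, 0 < τ → ∀ x,
      ‖f x - kconv n K τ f x‖ₑ ≤ c * ballMeans n M f τ x := by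
  let B : ContDiffBump (0 : En n) := ⟨1 / 2, 1, by norm_num, by norm_num⟩
  set φ : En n → ℝ := B.normed volume with hφ
  have hφs : ContDiff ℝ (⊤ : ℕ∞) φ := B.contDiff_normed
  have hφk : IsKer n 1 φ := by
    refine ⟨hφs, fun a ha => ?_⟩
    have : a ∉ Function.support φ := by
      rw [hφ, B.support_normed_eq]
      simp [B, ha.le]
    simpa using this
  have hφ1 : ∫ a, φ a = 1 := B.integral_normed
  obtain ⟨c, hc, hb⟩ := hφk.bound
  set b : ℕ → ℝ := fun i => (-1 : ℝ) ^ (i + 1) * (M.choose (i + 1) : ℝ) with hbdef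
  set K : En n → ℝ := fun a => -∑ i ∈ Finset.range M,
    b i * ((((i : ℝ) + 1) ^ n)⁻¹ * φ (((i : ℝ) + 1)⁻¹ • a)) with hKdef
  refine ⟨M, K, by positivity, ⟨?_, ?_⟩, c, hc, ?_⟩
  · refine ContDiff.neg (ContDiff.sum fun i _ => contDiff_const.mul (contDiff_const.mul
      (hφs.comp (contDiff_const_smul _))))
  · intro a ha
    simp only [hKdef, neg_eq_zero]
    refine Finset.sum_eq_zero fun i hi => ?_
    rw [hφk.supp, mul_zero, mul_zero]
    have hi' : (i : ℝ) + 1 ≤ M := by exact_mod_cast Finset.mem_range.1 hi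
    rw [norm_smul, Real.norm_of_nonneg (by positivity), ← div_eq_inv_mul, one_lt_div (by positivity)]
    linarith
  intro f hf τ hτ x
  have hi1 : ∀ i : ℕ, Integrable (fun a => φ a * f (x + (((i : ℝ) + 1) * τ) • a)) := fun i =>
    hφk.integrable (by positivity) hf x
  have hi2 : ∀ i : ℕ, ∫ a, φ a * f (x + (((i : ℝ) + 1) * τ) • a) =
      ∫ a, (((i : ℝ) + 1) ^ n)⁻¹ * φ (((i : ℝ) + 1)⁻¹ • a) * f (x + τ • a) := by
    intro i
    have hp : (0 : ℝ) < (i : ℝ) + 1 := by positivity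
    have := Measure.integral_comp_smul (volume : Measure (En n))
      (fun a => φ (((i : ℝ) + 1)⁻¹ • a) * f (x + τ • a)) ((i : ℝ) + 1)
    rw [finrank_euclideanSpace_fin, abs_of_pos (by positivity), smul_eq_mul,
      ← integral_const_mul] at this
    simp only [mul_assoc]
    rw [← this]
    congr 1
    funext a
    rw [inv_smul_smul₀ hp.ne', smul_smul, mul_comm τ]
  have hi3 : ∀ i : ℕ, Integrable
      (fun a => (((i : ℝ) + 1) ^ n)⁻¹ * φ (((i : ℝ) + 1)⁻¹ • a) * f (x + τ • a)) := by
    intro i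
    have hp : (0 : ℝ) < (i : ℝ) + 1 := by positivity
    have hk : IsKer n ((i : ℝ) + 1)
        (fun a => (((i : ℝ) + 1) ^ n)⁻¹ * φ (((i : ℝ) + 1)⁻¹ • a)) := by
      refine ⟨contDiff_const.mul (hφs.comp (contDiff_const_smul _)), fun a ha => ?_⟩
      rw [hφk.supp, mul_zero]
      rw [norm_smul, Real.norm_of_nonneg (by positivity), ← div_eq_inv_mul, one_lt_div hp]
      exact ha
    exact hk.integrable hτ hf x
  have hconv : kconv n K τ f x =
      -∑ i ∈ Finset.range M, b i * ∫ a, φ a * f (x + (((i : ℝ) + 1) * τ) • a) := by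
    simp only [hi2]
    simp only [← integral_const_mul]
    rw [← integral_finsetSum _ fun i _ => (hi3 i).const_mul _, ← integral_neg]
    unfold kconv
    congr 1
    funext a
    simp only [hKdef, neg_mul, Finset.sum_mul, mul_assoc]
  have hdiff : ∀ a, (-1 : ℝ) ^ M * iterDiff n M f (τ • a) x =
      (∑ i ∈ Finset.range M, b i * f (x + (((i : ℝ) + 1) * τ) • a)) + f x := by
    intro a
    unfold iterDiff
    rw [Finset.mul_sum, Finset.sum_range_succ']
    congr 1
    · refine Finset.sum_congr rfl fun i hi => ?_
      have hi' : i + 1 ≤ M := Finset.mem_range.1 hi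
      have : (-1 : ℝ) ^ M * (-1) ^ (M - (i + 1)) = (-1) ^ (i + 1) := by
        obtain ⟨j, rfl⟩ := Nat.exists_eq_add_of_le hi'
        rw [Nat.add_sub_cancel_left, pow_add, mul_assoc, ← mul_pow]
        simp
      rw [← mul_assoc, ← mul_assoc, this, smul_smul]
      push_cast
      rfl
    · simp [← mul_assoc, ← mul_pow]
  have hmain : f x - kconv n K τ f x =
      ∫ a, φ a * ((-1 : ℝ) ^ M * iterDiff n M f (τ • a) x) := by
    simp only [hdiff, mul_add, Finset.mul_sum]
    rw [integral_add, integral_finsetSum, integral_mul_const, hφ1, hconv]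
    · simp only [mul_left_comm (φ _) (b _), integral_const_mul]
      ring
    · intro i _
      simpa only [mul_left_comm (φ _) (b _)] using (hi1 i).const_mul (b i)
    · refine integrable_finsetSum _ fun i _ => ?_
      simpa only [mul_left_comm (φ _) (b _)] using (hi1 i).const_mul (b i)
    · exact (hφs.continuous.integrable_of_hasCompactSupport hφk.hasCompactSupport).mul_const _
  have hset : {h : En n | ‖h‖ ≤ 1} = Metric.closedBall (0 : En n) 1 := by
    ext; simp
  rw [hmain]
  refine (enorm_integral_le_lintegral_enorm _).trans ?_
  unfold ballMeans
  have hm : Measurable fun h => iterDiff n M f (τ • h) x :=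
    (measurable_iterDiff (M := M) hf.meas).comp (by fun_prop : Measurable fun h : En n => (x, τ • h))
  rw [hset, ← lintegral_const_mul _ (by fun_prop),
    ← lintegral_indicator Metric.isClosed_closedBall.measurableSet]
  refine lintegral_mono fun a => ?_
  by_cases ha : a ∈ Metric.closedBall (0 : En n) 1
  · rw [Set.indicator_of_mem ha, enorm_mul, enorm_mul]
    have : ‖(-1 : ℝ) ^ M‖ₑ = 1 := by simp [enorm_pow]
    rw [this, one_mul]
    exact mul_le_mul' (hb a) le_rfl
  · rw [hφk.supp a (by simpa using ha)]; simp

end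

/-! ### Smoothing at dyadic scales and the embedding into `L^∞` -/

section

variable {n : ℕ}

/-- Admissible parameters: the power weight `|x|^α` is nondegenerate and in the class `A_p`. -/
structure Adm (n : ℕ) (p α : ℝ) : Prop where
  hn : 1 ≤ n
  hp : 1 < p
  hα0 : 0 ≤ α
  hα : α < n * (p - 1)

/-- The `L^p(|·|^α)` norm of the ball means, as a function of the scale. -/
def bmNorm (n : ℕ) (p α : ℝ) (M : ℕ) (f : En n → ℝ) (t : ℝ) : ℝ≥0∞ :=
  wLpE n p α (ballMeans n M f t)

lemma measurable_ballMeans_uncurry {M : ℕ} {f : En n → ℝ} (hf : Measurable f) :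
    Measurable (fun z : ℝ × En n => ballMeans n M f z.1 z.2) := by
  unfold ballMeans
  have : Measurable (fun w : (ℝ × En n) × En n => iterDiff n M f (w.1.1 • w.2) w.1.2) :=
    (measurable_iterDiff hf).comp
      (by fun_prop : Measurable fun w : (ℝ × En n) × En n => (w.1.2, w.1.1 • w.2))
  exact Measurable.lintegral_prod_right'
    (f := fun w : (ℝ × En n) × En n => (‖iterDiff n M f (w.1.1 • w.2) w.1.2‖₊ : ℝ≥0∞))
    (by fun_prop)

lemma measurable_ballMeans {M : ℕ} {f : En n → ℝ} (hf : Measurable f) (t : ℝ) :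
    Measurable (ballMeans n M f t) := by
  have : Measurable (fun w : En n × En n => iterDiff n M f (t • w.2) w.1) :=
    (measurable_iterDiff hf).comp
      (by fun_prop : Measurable fun w : En n × En n => (w.1, t • w.2))
  unfold ballMeans
  exact Measurable.lintegral_prod_right'
    (f := fun w : En n × En n => (‖iterDiff n M f (t • w.2) w.1‖₊ : ℝ≥0∞))
    (by fun_prop)

lemma measurable_bmNorm {p α : ℝ} {M : ℕ} {f : En n → ℝ} (hf : Measurable f) :
    Measurable (bmNorm n p α M f) := by
  unfold bmNorm wLpE
  have h := measurable_ballMeans_uncurry (M := M) hf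
  refine Measurable.pow_const ?_ _
  exact Measurable.lintegral_prod_right'
    (f := fun z : ℝ × En n => ballMeans n M f z.1 z.2 ^ p * (‖z.2‖₊ : ℝ≥0∞) ^ α)
    (by fun_prop)

lemma wLp_eq (p α : ℝ) (f : En n → ℝ) : wLp n p α f = wLpE n p α (fun x => ‖f x‖ₑ) := rfl

lemma Adm.uli {p α : ℝ} (A : Adm n p α) {f : En n → ℝ} (hf : Measurable f)
    (h : wLp n p α f ≠ ∞) : ULI n f := by
  refine ⟨hf, fun R τ hτ => ?_⟩
  obtain ⟨C, hC, hb⟩ := avg_le_sup n A.hn A.hp A.hα0 A.hα R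
  refine ⟨_, ?_, fun x => hb τ hτ (fun y => ‖f y‖ₑ) (by fun_prop) x⟩
  refine ENNReal.mul_ne_top (ENNReal.mul_ne_top hC ?_) h
  exact ENNReal.rpow_ne_top_of_ne_zero (by simpa using hτ) (by simp)

lemma kconv_Lp {p α : ℝ} (A : Adm n p α) {R : ℝ} (hR : 0 ≤ R) {K : En n → ℝ} (hK : IsKer n R K) :
    ∃ C : ℝ≥0∞, C ≠ ∞ ∧ ∀ τ : ℝ, 0 < τ → ∀ f : En n → ℝ, Measurable f →
      wLpE n p α (fun x => ‖kconv n K τ f x‖ₑ) ≤ C * wLpE n p α (fun x => ‖f x‖ₑ) := by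
  obtain ⟨c, hc, h⟩ := enorm_kconv_le hK
  obtain ⟨C, hC, h2⟩ := avg_Lp n A.hn A.hp A.hα0 A.hα hR
  refine ⟨c * C, ENNReal.mul_ne_top hc hC, fun τ hτ f hf => ?_⟩
  calc _ ≤ wLpE n p α (fun x => c * avg n R τ (fun y => ‖f y‖ₑ) x) :=
        wLpE_mono n A.hp (h τ f hf)
    _ = c * wLpE n p α (avg n R τ (fun y => ‖f y‖ₑ)) :=
        wLpE_const_mul n A.hp c (measurable_avg R τ (by fun_prop))
    _ ≤ _ := by
        rw [mul_assoc]
        gcongr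
        exact h2 τ hτ _ (by fun_prop)

/-- A smooth kernel reproducing `f` up to its `M`-th differences. -/
structure RepKer (n M : ℕ) (R : ℝ) (K : En n → ℝ) (c : ℝ≥0∞) : Prop where
  hR : 0 ≤ R
  ker : IsKer n R K
  hc : c ≠ ∞
  rep : ∀ f : En n → ℝ, ULI n f → ∀ τ : ℝ, 0 < τ → ∀ x,
      ‖f x - kconv n K τ f x‖ₑ ≤ c * ballMeans n M f τ x

/-- The twofold smoothing `g_τ = T_{K,τ} T_{K,τ} f`. -/
def smt (n : ℕ) (K : En n → ℝ) (f : En n → ℝ) (τ : ℝ) : En n → ℝ :=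
  kconv n K τ (kconv n K τ f)

/-- The increment `T_{K,τ} f - T_{K,2τ} f`. -/
def incr (n : ℕ) (K : En n → ℝ) (f : En n → ℝ) (τ : ℝ) (x : En n) : ℝ :=
  kconv n K τ f x - kconv n K (2 * τ) f x

lemma RepKer.approx {M : ℕ} {R : ℝ} {K : En n → ℝ} {c : ℝ≥0∞} (H : RepKer n M R K c) {p α : ℝ}
    (A : Adm n p α) : ∃ C : ℝ≥0∞, C ≠ ∞ ∧ ∀ f : En n → ℝ, ULI n f → ∀ τ : ℝ, 0 < τ →
      wLpE n p α (fun x => ‖f x - smt n K f τ x‖ₑ) ≤ C * bmNorm n p α M f τ := by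
  obtain ⟨C, hC, h⟩ := kconv_Lp A H.hR H.ker
  have hc := H.hc
  refine ⟨c + C * c, by finiteness, fun f hf τ hτ => ?_⟩
  have hfS : ULI n (kconv n K τ f) := hf.kconv hτ H.ker
  have hd : ULI n (fun y => f y - kconv n K τ f y) := hf.sub hfS
  have hm1 := hd.meas
  have hm2 := measurable_kconv H.ker τ hd.meas
  have h1 : wLpE n p α (fun x => ‖f x - kconv n K τ f x‖ₑ) ≤ c * bmNorm n p α M f τ := by
    refine (wLpE_mono n A.hp (H.rep f hf τ hτ)).trans ?_
    rw [wLpE_const_mul n A.hp _ (measurable_ballMeans hf.meas τ)]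
    rfl
  calc _ ≤ wLpE n p α (fun x => ‖f x - kconv n K τ f x‖ₑ +
        ‖kconv n K τ (fun y => f y - kconv n K τ f y) x‖ₑ) := by
        refine wLpE_mono n A.hp fun x => ?_
        have e : f x - smt n K f τ x = (f x - kconv n K τ f x) +
            kconv n K τ (fun y => f y - kconv n K τ f y) x := by
          rw [kconv_sub hτ H.ker hf hfS, smt]; ring
        rw [e]
        exact enorm_add_le _ _
    _ ≤ wLpE n p α (fun x => ‖f x - kconv n K τ f x‖ₑ) +
        wLpE n p α (fun x => ‖kconv n K τ (fun y => f y - kconv n K τ f y) x‖ₑ) :=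
        wLpE_add_le n A.hp (by fun_prop) (by fun_prop)
    _ ≤ c * bmNorm n p α M f τ + C * (c * bmNorm n p α M f τ) := by
        gcongr
        refine (h τ hτ _ hd.meas).trans ?_
        gcongr
    _ = _ := by ring

lemma RepKer.incr_uli {M : ℕ} {R : ℝ} {K : En n → ℝ} {c : ℝ≥0∞} (H : RepKer n M R K c)
    {f : En n → ℝ} (hf : ULI n f) {τ : ℝ} (hτ : 0 < τ) : ULI n (incr n K f τ) :=
  (hf.kconv hτ H.ker).sub (hf.kconv (by positivity) H.ker)

lemma RepKer.incr_Lp {M : ℕ} {R : ℝ} {K : En n → ℝ} {c : ℝ≥0∞} (H : RepKer n M R K c) {p α : ℝ}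
    (A : Adm n p α) {f : En n → ℝ} (hf : ULI n f) {τ : ℝ} (hτ : 0 < τ) :
      wLpE n p α (fun x => ‖incr n K f τ x‖ₑ) ≤
        c * (bmNorm n p α M f τ + bmNorm n p α M f (2 * τ)) := by
  have m1 := measurable_ballMeans (M := M) hf.meas τ
  have m2 := measurable_ballMeans (M := M) hf.meas (2 * τ)
  calc _ ≤ wLpE n p α (fun x => c * (ballMeans n M f τ x + ballMeans n M f (2 * τ) x)) := by
        refine wLpE_mono n A.hp fun x => ?_
        have e : incr n K f τ x = (f x - kconv n K (2 * τ) f x) - (f x - kconv n K τ f x) := by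
          unfold incr; ring
        rw [e, add_comm, mul_add]
        exact enorm_sub_le.trans (add_le_add (H.rep f hf _ (by positivity) x) (H.rep f hf τ hτ x))
    _ = c * wLpE n p α (fun x => ballMeans n M f τ x + ballMeans n M f (2 * τ) x) :=
        wLpE_const_mul n A.hp _ (by fun_prop)
    _ ≤ _ := by
        gcongr
        exact wLpE_add_le n A.hp m1 m2

/-- The kernel `K + 2⁻ⁿ K(·/2)`. -/
def sumKer (n : ℕ) (K : En n → ℝ) (a : En n) : ℝ := K a + dblKer n K a

lemma RepKer.ker2 {M : ℕ} {R : ℝ} {K : En n → ℝ} {c : ℝ≥0∞} (H : RepKer n M R K c) :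
    IsKer n (2 * R) K := H.ker.mono (by linarith [H.hR])

lemma RepKer.sumKer {M : ℕ} {R : ℝ} {K : En n → ℝ} {c : ℝ≥0∞} (H : RepKer n M R K c) :
    IsKer n (2 * R) (sumKer n K) := H.ker2.add H.ker.dbl

/-- Consecutive smoothings differ by a smoothing of the increment. -/
lemma RepKer.smt_sub {M : ℕ} {R : ℝ} {K : En n → ℝ} {c : ℝ≥0∞} (H : RepKer n M R K c)
    {f : En n → ℝ} (hf : ULI n f) {τ : ℝ} (hτ : 0 < τ) (x : En n) :
    smt n K f τ x - smt n K f (2 * τ) x = kconv n (_root_.sumKer n K) τ (incr n K f τ) x := by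
  have e : kconv n K (2 * τ) f = kconv n (dblKer n K) τ f :=
    funext fun y => (kconv_dbl K τ f y).symm
  have u1 := hf.kconv hτ H.ker2
  have u2 := hf.kconv hτ H.ker.dbl
  unfold smt
  rw [show _root_.sumKer n K = fun a => K a + dblKer n K a from rfl,
    kconv_add_ker hτ H.ker2 H.ker.dbl (H.incr_uli hf hτ)]
  have ei : incr n K f τ = fun y => kconv n K τ f y - kconv n (dblKer n K) τ f y := by
    funext y; simp only [incr, e]
  rw [ei, kconv_sub hτ H.ker2 u1 u2, kconv_sub hτ H.ker.dbl u1 u2, e, ← kconv_dbl K τ,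
    kconv_comm hτ H.ker2 H.ker.dbl hf]
  ring

/-- The embedding into `L^∞`. The smoothings `g_τ` along `τ = t₀ 2^{-j}` have summable sup-norm
increments, so they are bounded by a common `B`; since they converge to `f` in `L^p(|·|^α)`, also
`|f| ≤ B` almost everywhere. -/
lemma RepKer.ae_bdd {M : ℕ} {R : ℝ} {K : En n → ℝ} {c : ℝ≥0∞} (H : RepKer n M R K c) {p α : ℝ}
    (A : Adm n p α) {f : En n → ℝ} (hf : ULI n f) {t₀ : ℝ} (ht : 0 < t₀) (ht1 : t₀ ≤ 1)
    (hsum : ∑' j : ℕ, ENNReal.ofReal (t₀ / 2 ^ j) ^ (-((n + α) / p)) *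
      bmNorm n p α M f (t₀ / 2 ^ j) ≠ ∞) :
    ∃ B : ℝ≥0∞, B ≠ ∞ ∧ ∀ᵐ x, ‖f x‖ₑ ≤ B := by
  have hp0 : 0 < p := by linarith [A.hp]
  set κ := (n + α) / p with hκ
  have hκ0 : 0 ≤ κ := by have := A.hα0; positivity
  set τ : ℕ → ℝ := fun j => t₀ / 2 ^ j with hτdef
  have hτ : ∀ j, 0 < τ j := fun j => by positivity
  have hτ2 : ∀ j, 2 * τ (j + 1) = τ j := fun j => by simp only [hτdef, pow_succ]; field_simp
  have hτ1 : ∀ j, τ j ≤ 1 := fun j =>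
    (div_le_self ht.le (one_le_pow₀ (by norm_num))).trans ht1
  set D := bmNorm n p α M f with hD
  set E : ℕ → ℝ≥0∞ := fun j => ENNReal.ofReal (τ j) ^ (-κ) * D (τ j) with hE
  have hEsum : ∑' j, E j ≠ ∞ := hsum
  have hDE : ∀ j, D (τ j) ≤ E j := by
    intro j
    have : 1 ≤ ENNReal.ofReal (τ j) ^ (-κ) := by
      rw [ENNReal.rpow_neg, ENNReal.one_le_inv]
      exact ENNReal.rpow_le_one (by simpa using hτ1 j) hκ0
    calc D (τ j) = 1 * D (τ j) := (one_mul _).symm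
      _ ≤ _ := mul_le_mul' this le_rfl
  obtain ⟨c1, hc1, hk⟩ := enorm_kconv_le H.sumKer
  obtain ⟨C1, hC1, hsup⟩ := avg_le_sup n A.hn A.hp A.hα0 A.hα (2 * R)
  have hc := H.hc
  -- `L^p(|·|^α) → L^∞` at scale `τ` costs `τ^{-κ}`, compensated by the summability of `E`
  have hinc : ∀ j x, ‖smt n K f (τ (j + 1)) x - smt n K f (τ j) x‖ₑ ≤
      c1 * C1 * c * (E (j + 1) + 2 ^ κ * E j) := by
    intro j x
    have e := H.smt_sub hf (hτ (j + 1)) x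
    rw [hτ2] at e
    rw [e]
    have hm := (H.incr_uli hf (hτ (j + 1))).meas
    have hE' : ENNReal.ofReal (τ (j + 1)) ^ (-κ) = 2 ^ κ * ENNReal.ofReal (τ j) ^ (-κ) := by
      rw [← hτ2 j, ENNReal.ofReal_mul (by norm_num),
        ENNReal.mul_rpow_of_ne_top (by simp) (by simp), ← mul_assoc]
      have : (2 : ℝ≥0∞) ^ κ * ENNReal.ofReal 2 ^ (-κ) = 1 := by
        rw [show ENNReal.ofReal 2 = 2 by simp, ← ENNReal.rpow_add _ _ (by simp) (by simp)]
        simp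
      rw [this, one_mul]
    calc _ ≤ c1 * avg n (2 * R) (τ (j + 1)) (fun y => ‖incr n K f (τ (j + 1)) y‖ₑ) x :=
          hk _ _ hm x
      _ ≤ c1 * (C1 * ENNReal.ofReal (τ (j + 1)) ^ (-κ) *
            (c * (D (τ (j + 1)) + D (τ j)))) := by
          gcongr
          refine (hsup _ (hτ (j + 1)) _ (by fun_prop) x).trans ?_
          gcongr
          have := H.incr_Lp A hf (hτ (j + 1))
          rwa [hτ2] at this
      _ = c1 * C1 * c * (ENNReal.ofReal (τ (j + 1)) ^ (-κ) * D (τ (j + 1)) +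
            ENNReal.ofReal (τ (j + 1)) ^ (-κ) * D (τ j)) := by ring
      _ = _ := by
          simp only [hE]
          congr 2
          rw [hE', mul_assoc]
  obtain ⟨c2, hc2, hk2⟩ := enorm_kconv_le H.ker
  obtain ⟨B0, hB0, hB0b⟩ := (hf.kconv (hτ 0) H.ker).bdd R (τ 0) (hτ 0)
  have hbase : ∀ x, ‖smt n K f (τ 0) x‖ₑ ≤ c2 * B0 := fun x =>
    (hk2 _ _ (hf.kconv (hτ 0) H.ker).meas x).trans (by gcongr; exact hB0b x)
  have hbd : ∀ j x, ‖smt n K f (τ j) x‖ₑ ≤ c2 * B0 +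
      ∑ i ∈ Finset.range j, c1 * C1 * c * (E (i + 1) + 2 ^ κ * E i) := by
    intro j x
    induction j with
    | zero => simpa using hbase x
    | succ j ih =>
      rw [Finset.sum_range_succ, ← add_assoc]
      calc _ = ‖smt n K f (τ j) x + (smt n K f (τ (j + 1)) x - smt n K f (τ j) x)‖ₑ := by
            congr 1; ring
        _ ≤ _ := (enorm_add_le _ _).trans (add_le_add ih (hinc j x))
  set B := c2 * B0 + ∑' i, c1 * C1 * c * (E (i + 1) + 2 ^ κ * E i) with hB
  have hBfin : B ≠ ∞ := by
    refine ENNReal.add_ne_top.2 ⟨by finiteness, ?_⟩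
    rw [ENNReal.tsum_mul_left, ENNReal.tsum_add, ENNReal.tsum_mul_left]
    have h1 : ∑' i, E (i + 1) ≠ ∞ :=
      ne_top_of_le_ne_top hEsum (ENNReal.tsum_comp_le_tsum_of_injective (add_left_injective 1) E)
    have h2 : (2 : ℝ≥0∞) ^ κ ≠ ∞ := ENNReal.rpow_ne_top_of_nonneg hκ0 (by simp)
    finiteness
  have hbdB : ∀ j x, ‖smt n K f (τ j) x‖ₑ ≤ B := fun j x =>
    (hbd j x).trans (add_le_add le_rfl (ENNReal.sum_le_tsum _))
  refine ⟨B, hBfin, ?_⟩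
  obtain ⟨C2, hC2, happ⟩ := H.approx A
  have hfm := hf.meas
  -- The excess `(|f| - B)₊` is dominated by `|f - g_τ|`, whose norm tends to zero.
  have hle : ∀ j, wLpE n p α (fun x => ‖f x‖ₑ - B) ≤ C2 * E j := by
    intro j
    refine le_trans ?_ ((happ f hf (τ j) (hτ j)).trans (by gcongr; exact hDE j))
    refine wLpE_mono n A.hp fun x => ?_
    rw [tsub_le_iff_right]
    calc ‖f x‖ₑ = ‖(f x - smt n K f (τ j) x) + smt n K f (τ j) x‖ₑ := by congr 1; ring
      _ ≤ _ := (enorm_add_le _ _).trans (by gcongr; exact hbdB j x)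
  have hzero : wLpE n p α (fun x => ‖f x‖ₑ - B) = 0 := by
    have ht : Tendsto (fun j => C2 * E j) atTop (nhds (C2 * 0)) :=
      ENNReal.Tendsto.const_mul (ENNReal.tendsto_atTop_zero_of_tsum_ne_top hEsum) (Or.inr hC2)
    rw [mul_zero] at ht
    exact le_antisymm (ge_of_tendsto' ht hle) zero_le
  unfold wLpE at hzero
  rw [ENNReal.rpow_eq_zero_iff_of_pos (by positivity), lintegral_eq_zero_iff (by fun_prop)] at hzero
  have : Nontrivial (En n) := by
    apply Module.nontrivial_of_finrank_pos (R := ℝ)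
    have := A.hn
    simp; omega
  filter_upwards [hzero, Measure.ae_ne volume (0 : En n)] with x hx hx0
  simp only [Pi.zero_apply, mul_eq_zero] at hx
  rcases hx with hx | hx
  · rw [ENNReal.rpow_eq_zero_iff_of_pos hp0, tsub_eq_zero_iff_le] at hx
    exact hx
  · rw [ENNReal.rpow_eq_zero_iff] at hx
    simp [hx0] at hx

end

/-! ### Ball means of the square -/

section

variable {n : ℕ}

lemma iterDiff_add (M : ℕ) (u v : En n → ℝ) (h x : En n) :
    iterDiff n M (fun y => u y + v y) h x = iterDiff n M u h x + iterDiff n M v h x := by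
  unfold iterDiff
  rw [← Finset.sum_add_distrib]
  exact Finset.sum_congr rfl fun i _ => by ring

/-- Extension of `avg_Lp` to `τ = 0`, which occurs for the term `i = 0` of the difference. -/
lemma avg_Lp_nonneg {p α : ℝ} (A : Adm n p α) {R : ℝ} (hR : 0 ≤ R) :
    ∃ C : ℝ≥0∞, C ≠ ∞ ∧ ∀ τ : ℝ, 0 ≤ τ → ∀ F : En n → ℝ≥0∞, Measurable F →
      wLpE n p α (avg n R τ F) ≤ C * wLpE n p α F := by
  obtain ⟨C, hC, h⟩ := avg_Lp n A.hn A.hp A.hα0 A.hα hR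
  have hV : volume (Metric.closedBall (0 : En n) R) ≠ ∞ := measure_closedBall_lt_top.ne
  refine ⟨C + volume (Metric.closedBall (0 : En n) R), by finiteness, fun τ hτ F hF => ?_⟩
  rw [add_mul]
  rcases hτ.eq_or_lt with rfl | hτ
  · refine le_add_left ?_
    rw [← wLpE_const_mul n A.hp _ hF]
    refine wLpE_mono n A.hp fun x => ?_
    simp [avg, mul_comm]
  · exact le_add_right (h τ hτ F hF)

/-- Ball means are bounded on `L^p(|·|^α)`, uniformly in the scale. -/
lemma ballMeans_Lp {p α : ℝ} (A : Adm n p α) (M : ℕ) :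
    ∃ C : ℝ≥0∞, C ≠ ∞ ∧ ∀ t : ℝ, 0 < t → ∀ u : En n → ℝ, Measurable u →
      wLpE n p α (ballMeans n M u t) ≤ C * wLpE n p α (fun x => ‖u x‖ₑ) := by
  obtain ⟨C, hC, h⟩ := avg_Lp_nonneg A (zero_le_one (α := ℝ))
  refine ⟨∑ i ∈ Finset.range (M + 1), (M.choose i : ℝ≥0∞) * C,
    (ENNReal.sum_lt_top.2 fun i _ => ENNReal.mul_lt_top (by simp) hC.lt_top).ne,
    fun t ht u hu => ?_⟩
  have hset : {h : En n | ‖h‖ ≤ 1} = Metric.closedBall (0 : En n) 1 := by ext; simp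
  calc _ ≤ wLpE n p α (fun x => ∑ i ∈ Finset.range (M + 1),
        (M.choose i : ℝ≥0∞) * avg n 1 (i * t) (fun y => ‖u y‖ₑ) x) := by
        refine wLpE_mono n A.hp fun x => ?_
        unfold ballMeans avg
        rw [hset]
        have : ∀ i ∈ Finset.range (M + 1), (M.choose i : ℝ≥0∞) *
            ∫⁻ a in Metric.closedBall (0 : En n) 1, ‖u (x + ((i : ℝ) * t) • a)‖ₑ =
            ∫⁻ a in Metric.closedBall (0 : En n) 1, (M.choose i : ℝ≥0∞) *
              ‖u (x + ((i : ℝ) * t) • a)‖ₑ := fun i _ =>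
          (lintegral_const_mul _ (by fun_prop)).symm
        rw [Finset.sum_congr rfl this, ← lintegral_finsetSum _ (fun i _ => by fun_prop)]
        refine lintegral_mono fun a => ?_
        unfold iterDiff
        rw [← enorm_eq_nnnorm]
        refine (enorm_sum_le _ _).trans (Finset.sum_le_sum fun i _ => ?_)
        rw [enorm_mul, enorm_mul, smul_smul]
        simp [enorm_pow]
    _ ≤ ∑ i ∈ Finset.range (M + 1), wLpE n p α (fun x =>
        (M.choose i : ℝ≥0∞) * avg n 1 (i * t) (fun y => ‖u y‖ₑ) x) :=
        wLpE_sum_le n A.hp _ fun i => by fun_prop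
    _ ≤ ∑ i ∈ Finset.range (M + 1), (M.choose i : ℝ≥0∞) * C * wLpE n p α (fun x => ‖u x‖ₑ) := by
        refine Finset.sum_le_sum fun i _ => ?_
        rw [wLpE_const_mul n A.hp _ (by fun_prop), mul_assoc]
        gcongr
        exact h _ (by positivity) _ (by fun_prop)
    _ = _ := by rw [Finset.sum_mul]

lemma kconv_bdd {R : ℝ} {K : En n → ℝ} (hK : IsKer n R K) :
    ∃ c : ℝ≥0∞, c ≠ ∞ ∧ ∀ τ (f : En n → ℝ), Measurable f → ∀ B : ℝ≥0∞, (∀ x, ‖f x‖ₑ ≤ B) →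
      ∀ x, ‖kconv n K τ f x‖ₑ ≤ c * B := by
  obtain ⟨c, hc, h⟩ := enorm_kconv_le hK
  have hV : volume (Metric.closedBall (0 : En n) R) ≠ ∞ := measure_closedBall_lt_top.ne
  refine ⟨c * volume (Metric.closedBall (0 : En n) R), by finiteness, fun τ f hf B hB x => ?_⟩
  rw [mul_assoc, mul_comm _ B]
  exact (h τ f hf x).trans (by gcongr; exact avg_le_of_le hB x)

/-- Differences of `g_τ² - g_{2τ}²`, for a bounded function `f`. -/
lemma RepKer.diff_sq_sub {M : ℕ} {R : ℝ} {K : En n → ℝ} {c : ℝ≥0∞} (H : RepKer n M R K c)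
    {f : En n → ℝ} (hf : Measurable f) {B : ℝ≥0∞} (hB : B ≠ ∞) (hfB : ∀ x, ‖f x‖ₑ ≤ B) :
    ∃ C : ℝ≥0∞, C ≠ ∞ ∧ ∀ τ : ℝ, 0 < τ → ∀ h x : En n, ‖h‖ ≤ τ →
      ‖iterDiff n M (fun y => smt n K f τ y ^ 2 - smt n K f (2 * τ) y ^ 2) h x‖ₑ ≤
        C * ENNReal.ofReal (‖h‖ / τ) ^ M *
          avg n (2 * R + M) τ (fun y => ‖incr n K f τ y‖ₑ) x := by
  obtain ⟨c0, hc0, hkb⟩ := kconv_bdd H.ker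
  obtain ⟨C1, hC1, h1⟩ := iterDiff_mul_le H.sumKer H.ker2 M
  obtain ⟨C2, hC2, h2⟩ := iterDiff_mul_le H.sumKer H.ker.dbl M
  set V := volume (Metric.closedBall (0 : En n) (2 * R + M))
  have hV : V ≠ ∞ := measure_closedBall_lt_top.ne
  have hu : ULI n f := ULI.of_bdd hf hB hfB
  refine ⟨C1 * (c0 * B * V) + C2 * (c0 * B * V), by finiteness, fun τ hτ h x hh => ?_⟩
  have hi := H.incr_uli hu hτ
  have e : (fun y => smt n K f τ y ^ 2 - smt n K f (2 * τ) y ^ 2) =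
      fun y => kconv n (_root_.sumKer n K) τ (incr n K f τ) y * kconv n K τ (kconv n K τ f) y +
        kconv n (_root_.sumKer n K) τ (incr n K f τ) y *
          kconv n (dblKer n K) τ (kconv n K (2 * τ) f) y := by
    funext y
    rw [← H.smt_sub hu hτ, kconv_dbl]
    simp only [smt]
    ring
  rw [e, iterDiff_add]
  refine (enorm_add_le _ _).trans ?_
  refine (add_le_add (h1 τ hτ _ _ hi (hu.kconv hτ H.ker) h x hh)
    (h2 τ hτ _ _ hi (hu.kconv (by positivity : 0 < 2 * τ) H.ker) h x hh)).trans ?_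
  have b1 := avg_le_of_le (R := 2 * R + M) (τ := τ) (hkb τ f hf B hfB) x
  have b2 := avg_le_of_le (R := 2 * R + M) (τ := τ) (hkb (2 * τ) f hf B hfB) x
  calc _ ≤ C1 * ENNReal.ofReal (‖h‖ / τ) ^ M *
          (avg n (2 * R + M) τ (fun y => ‖incr n K f τ y‖ₑ) x * (c0 * B * V)) +
        C2 * ENNReal.ofReal (‖h‖ / τ) ^ M *
          (avg n (2 * R + M) τ (fun y => ‖incr n K f τ y‖ₑ) x * (c0 * B * V)) := by
        gcongr
    _ = _ := by ring

/-- Differences of `g_τ²`, for a bounded function `f`. -/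
lemma RepKer.diff_sq {M : ℕ} {R : ℝ} {K : En n → ℝ} {c : ℝ≥0∞} (H : RepKer n M R K c)
    {f : En n → ℝ} (hf : Measurable f) {B : ℝ≥0∞} (hB : B ≠ ∞) (hfB : ∀ x, ‖f x‖ₑ ≤ B) :
    ∃ C : ℝ≥0∞, C ≠ ∞ ∧ ∀ τ : ℝ, 0 < τ → ∀ h x : En n, ‖h‖ ≤ τ →
      ‖iterDiff n M (fun y => smt n K f τ y ^ 2) h x‖ₑ ≤
        C * ENNReal.ofReal (‖h‖ / τ) ^ M *
          avg n (2 * R + M) τ (fun y => ‖kconv n K τ f y‖ₑ) x := by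
  obtain ⟨c0, hc0, hkb⟩ := kconv_bdd H.ker
  obtain ⟨C1, hC1, h1⟩ := iterDiff_mul_le H.ker2 H.ker2 M
  set V := volume (Metric.closedBall (0 : En n) (2 * R + M))
  have hV : V ≠ ∞ := measure_closedBall_lt_top.ne
  have hu : ULI n f := ULI.of_bdd hf hB hfB
  refine ⟨C1 * (c0 * B * V), by finiteness, fun τ hτ h x hh => ?_⟩
  have e : (fun y => smt n K f τ y ^ 2) =
      fun y => kconv n K τ (kconv n K τ f) y * kconv n K τ (kconv n K τ f) y := by
    funext y
    simp only [smt]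
    ring
  rw [e]
  refine (h1 τ hτ _ _ (hu.kconv hτ H.ker) (hu.kconv hτ H.ker) h x hh).trans ?_
  have b1 := avg_le_of_le (R := 2 * R + M) (τ := τ) (hkb τ f hf B hfB) x
  calc _ ≤ C1 * ENNReal.ofReal (‖h‖ / τ) ^ M *
          (avg n (2 * R + M) τ (fun y => ‖kconv n K τ f y‖ₑ) x * (c0 * B * V)) := by
        gcongr
    _ = _ := by ring

/-- The ball means of `f²` at scale `t` are controlled by those of `f` at the scales `2^j t`, with
weights decaying like `2^{-jM}`. -/
lemma RepKer.bmNorm_sq {M : ℕ} {R : ℝ} {K : En n → ℝ} {c : ℝ≥0∞} (H : RepKer n M R K c)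
    {p α : ℝ} (A : Adm n p α)
    {f : En n → ℝ} (hf : Measurable f) {B : ℝ≥0∞} (hB : B ≠ ∞) (hfB : ∀ x, ‖f x‖ₑ ≤ B)
    (hfL : wLp n p α f ≠ ∞) :
    ∃ C : ℝ≥0∞, C ≠ ∞ ∧ ∀ t : ℝ, 0 < t → ∀ J : ℕ,
      bmNorm n p α M (fun x => f x ^ 2) t ≤
        C * (∑ j ∈ Finset.range (J + 1), (2⁻¹ : ℝ≥0∞) ^ (j * M) * bmNorm n p α M f (2 ^ j * t) +
          (2⁻¹ : ℝ≥0∞) ^ (J * M)) := by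
  obtain ⟨c0, hc0, hkb⟩ := kconv_bdd H.ker
  obtain ⟨C1, hC1, h1⟩ := H.diff_sq_sub hf hB hfB
  obtain ⟨C2, hC2, h2⟩ := H.diff_sq hf hB hfB
  obtain ⟨C3, hC3, h3⟩ := ballMeans_Lp A M
  obtain ⟨C4, hC4, h4⟩ := H.approx A
  obtain ⟨C5, hC5, h5⟩ := avg_Lp n A.hn A.hp A.hα0 A.hα
    (by have := H.hR; positivity : (0 : ℝ) ≤ 2 * R + M)
  obtain ⟨C6, hC6, h6⟩ := kconv_Lp A H.hR H.ker
  have hu : ULI n f := ULI.of_bdd hf hB hfB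
  set V := volume (Metric.closedBall (0 : En n) 1) with hVdef
  have hV : V ≠ ∞ := measure_closedBall_lt_top.ne
  have hset : {h : En n | ‖h‖ ≤ 1} = Metric.closedBall (0 : En n) 1 := by ext; simp
  have hcc := H.hc
  set D := bmNorm n p α M f with hD
  set a1 : ℝ≥0∞ := C3 * ((B + c0 * (c0 * B)) * C4) with ha1
  set a2 : ℝ≥0∞ := V * (C1 * (C5 * c)) * (1 + 2 ^ M) with ha2
  set a3 : ℝ≥0∞ := V * (C2 * (C5 * (C6 * wLp n p α f))) with ha3
  refine ⟨a1 + a2 + a3, by finiteness, fun t ht J => ?_⟩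
  set τ : ℕ → ℝ := fun j => 2 ^ j * t with hτdef
  have hτ : ∀ j, 0 < τ j := fun j => by positivity
  have hτ2 : ∀ j, 2 * τ j = τ (j + 1) := fun j => by simp only [hτdef, pow_succ]; ring
  have hτ0 : τ 0 = t := by simp [hτdef]
  have hτt : ∀ j, t ≤ τ j := fun j =>
    le_mul_of_one_le_left ht.le (one_le_pow₀ (by norm_num))
  have hratio : ∀ j (h : En n), ‖h‖ ≤ t →
      ENNReal.ofReal (‖h‖ / τ j) ^ M ≤ (2⁻¹ : ℝ≥0∞) ^ (j * M) := by
    intro j h hh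
    rw [pow_mul]
    gcongr
    have : ‖h‖ / τ j ≤ (2⁻¹ : ℝ) ^ j := by
      rw [div_le_iff₀ (hτ j)]
      simp only [hτdef]
      rw [← mul_assoc, ← mul_pow]
      simpa using hh
    refine (ENNReal.ofReal_le_ofReal this).trans ?_
    rw [ENNReal.ofReal_pow (by positivity), ENNReal.ofReal_inv_of_pos (by norm_num)]
    simp
  set E1 : ℕ → En n → ℝ≥0∞ := fun j x => C1 * (2⁻¹ : ℝ≥0∞) ^ (j * M) *
    avg n (2 * R + M) (τ j) (fun y => ‖incr n K f (τ j) y‖ₑ) x with hE1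
  set E2 : En n → ℝ≥0∞ := fun x => C2 * (2⁻¹ : ℝ≥0∞) ^ (J * M) *
    avg n (2 * R + M) (τ J) (fun y => ‖kconv n K (τ J) f y‖ₑ) x with hE2
  have mi : ∀ j, Measurable (incr n K f (τ j)) := fun j => (H.incr_uli hu (hτ j)).meas
  have mk : Measurable (kconv n K (τ J) f) := measurable_kconv H.ker _ hf
  have mE1 : ∀ j, Measurable (E1 j) := fun j => by have := mi j; fun_prop
  have mE2 : Measurable E2 := by fun_prop
  -- telescoping `g_t² = ∑_{j<N} (g_{2^j t}² - g_{2^{j+1} t}²) + g_{2^N t}²`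
  have htel : ∀ (h x : En n), ‖h‖ ≤ t → ∀ N : ℕ,
      ‖iterDiff n M (fun y => smt n K f t y ^ 2) h x‖ₑ ≤
        ∑ j ∈ Finset.range N, E1 j x + ‖iterDiff n M (fun y => smt n K f (τ N) y ^ 2) h x‖ₑ := by
    intro h x hh N
    induction N with
    | zero => simp [hτ0]
    | succ N ih =>
      refine ih.trans ?_
      rw [Finset.sum_range_succ, add_assoc]
      gcongr
      have e : (fun y => smt n K f (τ N) y ^ 2) = fun y =>
          (smt n K f (τ N) y ^ 2 - smt n K f (2 * τ N) y ^ 2) + smt n K f (τ (N + 1)) y ^ 2 := by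
        funext y; rw [hτ2]; ring
      rw [e, iterDiff_add]
      refine (enorm_add_le _ _).trans ?_
      gcongr
      refine (h1 (τ N) (hτ N) h x (hh.trans (hτt N))).trans ?_
      simp only [hE1]
      exact mul_le_mul_left (mul_le_mul_right (hratio N h hh) _) _
  have hpt : ∀ (h x : En n), ‖h‖ ≤ t →
      ‖iterDiff n M (fun y => smt n K f t y ^ 2) h x‖ₑ ≤ ∑ j ∈ Finset.range J, E1 j x + E2 x := by
    intro h x hh
    refine (htel h x hh J).trans ?_
    gcongr
    refine (h2 (τ J) (hτ J) h x (hh.trans (hτt J))).trans ?_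
    simp only [hE2]
    exact mul_le_mul_left (mul_le_mul_right (hratio J h hh) _) _
  have ms : Measurable (smt n K f t) := measurable_kconv H.ker _ (measurable_kconv H.ker _ hf)
  set u : En n → ℝ := fun x => f x ^ 2 - smt n K f t x ^ 2 with hudef
  have mu : Measurable u := by fun_prop
  have hu1 : wLpE n p α (fun x => ‖u x‖ₑ) ≤ (B + c0 * (c0 * B)) * C4 * D t := by
    calc _ ≤ wLpE n p α (fun x => (B + c0 * (c0 * B)) * ‖f x - smt n K f t x‖ₑ) := by
          refine wLpE_mono n A.hp fun x => ?_
          have : u x = (f x + smt n K f t x) * (f x - smt n K f t x) := by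
            simp only [hudef]; ring
          rw [this, enorm_mul]
          gcongr
          refine (enorm_add_le _ _).trans (add_le_add (hfB x) ?_)
          exact hkb _ _ (measurable_kconv H.ker _ hf) _ (hkb _ _ hf _ hfB) x
      _ = (B + c0 * (c0 * B)) * wLpE n p α (fun x => ‖f x - smt n K f t x‖ₑ) :=
          wLpE_const_mul n A.hp _ (by fun_prop)
      _ ≤ _ := by
          rw [mul_assoc]
          gcongr
          exact h4 f hu t ht
  have hball : ∀ x, ballMeans n M (fun x => f x ^ 2) t x ≤
      ballMeans n M u t x + V * (∑ j ∈ Finset.range J, E1 j x + E2 x) := by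
    intro x
    have e : (fun x => f x ^ 2) = fun x => u x + smt n K f t x ^ 2 := by
      funext x; simp only [hudef]; ring
    rw [e]
    unfold ballMeans
    rw [hset]
    calc _ ≤ ∫⁻ h in Metric.closedBall (0 : En n) 1, (‖iterDiff n M u (t • h) x‖ₑ +
          (∑ j ∈ Finset.range J, E1 j x + E2 x)) := by
          refine setLIntegral_mono' Metric.isClosed_closedBall.measurableSet fun h hh => ?_
          rw [iterDiff_add, ← enorm_eq_nnnorm]
          refine (enorm_add_le _ _).trans ?_
          gcongr
          refine hpt _ x ?_
          rw [norm_smul, Real.norm_of_nonneg ht.le]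
          have : ‖h‖ ≤ 1 := by simpa using hh
          exact mul_le_of_le_one_right ht.le this
      _ = _ := by
          rw [lintegral_add_right _ measurable_const, setLIntegral_const, mul_comm V]
          rfl
  have mb := measurable_ballMeans (M := M) mu t
  have hE1L : ∀ j, wLpE n p α (E1 j) ≤
      C1 * (C5 * c) * ((2⁻¹ : ℝ≥0∞) ^ (j * M) * (D (τ j) + D (τ (j + 1)))) := by
    intro j
    have := mi j
    simp only [hE1]
    rw [wLpE_const_mul n A.hp _ (by fun_prop)]
    calc _ ≤ C1 * (2⁻¹ : ℝ≥0∞) ^ (j * M) * (C5 * (c * (D (τ j) + D (τ (j + 1))))) := by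
          gcongr
          refine (h5 _ (hτ j) _ (by fun_prop)).trans ?_
          gcongr
          have := H.incr_Lp A hu (hτ j)
          rwa [hτ2] at this
      _ = _ := by ring
  have hE2L : wLpE n p α E2 ≤ C2 * (C5 * (C6 * wLp n p α f)) * (2⁻¹ : ℝ≥0∞) ^ (J * M) := by
    simp only [hE2]
    rw [wLpE_const_mul n A.hp _ (by fun_prop)]
    calc _ ≤ C2 * (2⁻¹ : ℝ≥0∞) ^ (J * M) * (C5 * (C6 * wLp n p α f)) := by
          gcongr
          refine (h5 _ (hτ J) _ (by fun_prop)).trans ?_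
          gcongr
          exact h6 _ (hτ J) _ hf
      _ = _ := by ring
  set S := ∑ j ∈ Finset.range (J + 1), (2⁻¹ : ℝ≥0∞) ^ (j * M) * D (τ j) with hS
  have hS0 : D t ≤ S := by
    have := Finset.single_le_sum (f := fun j => (2⁻¹ : ℝ≥0∞) ^ (j * M) * D (τ j))
      (fun i _ => zero_le) (Finset.mem_range.2 (Nat.succ_pos J))
    simpa [hτ0] using this
  have hS1 : ∑ j ∈ Finset.range J, (2⁻¹ : ℝ≥0∞) ^ (j * M) * (D (τ j) + D (τ (j + 1))) ≤
      (1 + 2 ^ M) * S := by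
    simp only [mul_add]
    rw [Finset.sum_add_distrib, add_mul, one_mul]
    refine add_le_add (Finset.sum_le_sum_of_subset (Finset.range_subset_range.2 (by omega))) ?_
    rw [hS, Finset.sum_range_succ', mul_add, Finset.mul_sum]
    refine le_add_right (Finset.sum_le_sum fun j _ => le_of_eq ?_)
    rw [Nat.succ_mul, pow_add, ← mul_assoc]
    congr 1
    rw [mul_left_comm, ← mul_pow, ENNReal.mul_inv_cancel (by simp) (by simp)]
    simp
  calc bmNorm n p α M (fun x => f x ^ 2) t
      ≤ wLpE n p α (fun x => ballMeans n M u t x +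
          V * (∑ j ∈ Finset.range J, E1 j x + E2 x)) := wLpE_mono n A.hp hball
    _ ≤ wLpE n p α (ballMeans n M u t) +
          wLpE n p α (fun x => V * (∑ j ∈ Finset.range J, E1 j x + E2 x)) :=
        wLpE_add_le n A.hp mb (by fun_prop)
    _ ≤ wLpE n p α (ballMeans n M u t) +
          V * (∑ j ∈ Finset.range J, wLpE n p α (E1 j) + wLpE n p α E2) := by
        gcongr
        rw [wLpE_const_mul n A.hp _ (by fun_prop)]
        gcongr
        refine (wLpE_add_le n A.hp (by fun_prop) mE2).trans ?_
        gcongr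
        exact wLpE_sum_le n A.hp _ mE1
    _ ≤ C3 * ((B + c0 * (c0 * B)) * C4 * S) + V * (C1 * (C5 * c) * ((1 + 2 ^ M) * S) +
          C2 * (C5 * (C6 * wLp n p α f)) * (2⁻¹ : ℝ≥0∞) ^ (J * M)) := by
        gcongr
        · refine (h3 t ht u mu).trans ?_
          gcongr
          exact hu1.trans (by gcongr)
        · refine (Finset.sum_le_sum fun j _ => hE1L j).trans ?_
          rw [← Finset.mul_sum]
          gcongr
    _ = a1 * S + a2 * S + a3 * (2⁻¹ : ℝ≥0∞) ^ (J * M) := by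
        simp only [ha1, ha2, ha3]; ring
    _ ≤ (a1 + a2 + a3) * S + (a1 + a2 + a3) * (2⁻¹ : ℝ≥0∞) ^ (J * M) := by
        rw [← add_mul]
        exact add_le_add (mul_le_mul_left le_self_add _) (mul_le_mul_left le_add_self _)
    _ = _ := by rw [mul_add]

end

/-! ### Integration over the scales -/

/-- The integral `∫_0^∞ G(t) dt/t`. -/
def dtt (G : ℝ → ℝ≥0∞) : ℝ≥0∞ := ∫⁻ t in Set.Ioi (0 : ℝ), G t * ENNReal.ofReal t⁻¹

lemma dtt_mono {G H : ℝ → ℝ≥0∞} (h : ∀ t, 0 < t → G t ≤ H t) : dtt G ≤ dtt H :=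
  setLIntegral_mono' measurableSet_Ioi fun t ht => mul_le_mul_left (h t ht) _

lemma dtt_const_mul {G : ℝ → ℝ≥0∞} (hG : Measurable G) (c : ℝ≥0∞) :
    dtt (fun t => c * G t) = c * dtt G := by
  unfold dtt
  rw [← lintegral_const_mul _ (by fun_prop)]
  simp only [mul_assoc]

lemma dtt_add {G H : ℝ → ℝ≥0∞} (hG : Measurable G) :
    dtt (fun t => G t + H t) = dtt G + dtt H := by
  unfold dtt
  rw [← lintegral_add_left (by fun_prop)]
  simp only [add_mul]

lemma dtt_tsum {G : ℕ → ℝ → ℝ≥0∞} (hG : ∀ j, Measurable (G j)) :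
    dtt (fun t => ∑' j, G j t) = ∑' j, dtt (G j) := by
  unfold dtt
  rw [← lintegral_tsum fun j => by have := hG j; fun_prop]
  simp only [ENNReal.tsum_mul_right]

/-- The measure `dt/t` is invariant under dilations. -/
lemma dtt_dilate {G : ℝ → ℝ≥0∞} (hG : Measurable G) {c : ℝ} (hc : 0 < c) :
    dtt (fun t => G (c * t)) = dtt G := by
  unfold dtt
  rw [← lintegral_indicator measurableSet_Ioi, ← lintegral_indicator measurableSet_Ioi]
  set H : ℝ → ℝ≥0∞ := (Set.Ioi (0 : ℝ)).indicator fun t => G t * ENNReal.ofReal t⁻¹ with hH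
  have hHm : Measurable H := Measurable.indicator (by fun_prop) measurableSet_Ioi
  have h1 : ∫⁻ t, H (c * t) = ENNReal.ofReal c⁻¹ * ∫⁻ t, H t := by
    have := lintegral_map (μ := (volume : Measure ℝ)) hHm (measurable_const_mul c)
    rw [← this, Real.map_volume_mul_left hc.ne', lintegral_smul_measure,
      abs_of_pos (inv_pos.2 hc), smul_eq_mul]
  have h2 : ∀ t, (Set.Ioi (0 : ℝ)).indicator (fun t => G (c * t) * ENNReal.ofReal t⁻¹) t =
      ENNReal.ofReal c * H (c * t) := by
    intro t
    by_cases ht : 0 < t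
    · have hct : 0 < c * t := mul_pos hc ht
      rw [hH, Set.indicator_of_mem (show t ∈ Set.Ioi (0 : ℝ) from ht),
        Set.indicator_of_mem (show c * t ∈ Set.Ioi (0 : ℝ) from hct), mul_left_comm,
        ← ENNReal.ofReal_mul hc.le]
      congr 2
      field_simp
    · have hct : ¬ 0 < c * t := fun h => ht (by
        by_contra h'
        exact absurd h (not_lt.2 (mul_nonpos_of_nonneg_of_nonpos hc.le (not_lt.1 h'))))
      rw [hH, Set.indicator_of_notMem (by simpa using ht),
        Set.indicator_of_notMem (by simpa using hct), mul_zero]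
  simp only [h2]
  rw [lintegral_const_mul _ (by fun_prop), h1, ← mul_assoc, ← ENNReal.ofReal_mul hc.le,
    mul_inv_cancel₀ hc.ne', ENNReal.ofReal_one, one_mul]

/-- If `∫ G dt/t` is finite then `G` is summable along some dyadic sequence: by dilation invariance
the integral over `(1/2, 1)` of `∑_j G(t/2^j)` is at most the full integral. -/
lemma exists_summable_dyadic {G : ℝ → ℝ≥0∞} (hG : Measurable G) (h : dtt G ≠ ∞) :
    ∃ t₀ : ℝ, t₀ ∈ Set.Ioo (1 / 2 : ℝ) 1 ∧ ∑' j : ℕ, G (t₀ / 2 ^ j) ≠ ∞ := by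
  set χ : ℝ → ℝ≥0∞ := (Set.Ioo (1 / 2 : ℝ) 1).indicator 1 with hχ
  have hχm : Measurable χ := measurable_one.indicator measurableSet_Ioo
  have hχ1 : ∀ u, 0 < u → ∑' j : ℕ, χ (2 ^ j * u) ≤ 1 := by
    intro u hu
    by_cases hex : ∃ j : ℕ, 2 ^ j * u ∈ Set.Ioo (1 / 2 : ℝ) 1
    · obtain ⟨j, hj⟩ := hex
      rw [tsum_eq_single j]
      · rw [hχ, Set.indicator_of_mem hj]; simp
      · intro i hi
        rw [hχ]
        refine Set.indicator_of_notMem (fun hi' => ?_) _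
        rcases lt_or_gt_of_ne hi with hlt | hlt
        · have : (2 : ℝ) ^ (i + 1) ≤ 2 ^ j := pow_le_pow_right₀ (by norm_num) hlt
          have h3 : (2 : ℝ) ^ (i + 1) * u ≤ 2 ^ j * u := by gcongr
          rw [pow_succ] at h3
          linarith [hi'.1, hj.2]
        · have : (2 : ℝ) ^ (j + 1) ≤ 2 ^ i := pow_le_pow_right₀ (by norm_num) hlt
          have h3 : (2 : ℝ) ^ (j + 1) * u ≤ 2 ^ i * u := by gcongr
          rw [pow_succ] at h3
          linarith [hi'.2, hj.1]
    · push Not at hex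
      have : ∀ j : ℕ, χ (2 ^ j * u) = 0 := fun j => Set.indicator_of_notMem (hex j) _
      simp [this]
  have hfin : dtt (fun t => ∑' j : ℕ, χ t * G (t / 2 ^ j)) ≤ dtt G := by
    rw [dtt_tsum fun j => by fun_prop]
    have : ∀ j : ℕ, dtt (fun t => χ t * G (t / 2 ^ j)) = dtt (fun t => χ (2 ^ j * t) * G t) := by
      intro j
      rw [← dtt_dilate (G := fun t => χ t * G (t / 2 ^ j)) (by fun_prop)
        (by positivity : (0 : ℝ) < 2 ^ j)]
      congr 1
      funext t
      rw [mul_div_cancel_left₀ _ (by positivity)]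
    rw [tsum_congr this, ← dtt_tsum fun j => by fun_prop]
    refine dtt_mono fun t ht => ?_
    rw [ENNReal.tsum_mul_right]
    exact mul_le_of_le_one_left' (hχ1 t ht)
  have hfin' := ne_top_of_le_ne_top h hfin
  unfold dtt at hfin'
  have hae := ae_lt_top (by fun_prop) hfin'
  rw [ae_restrict_iff' measurableSet_Ioi] at hae
  have hne : (volume (Set.Ioo (1 / 2 : ℝ) 1)) ≠ 0 := by
    rw [Real.volume_Ioo]
    norm_num
  obtain ⟨t, htm, ht⟩ := (hae.and_frequently (frequently_ae_iff.2 hne :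
    ∃ᵐ t, t ∈ Set.Ioo (1 / 2 : ℝ) 1)).exists
  have ht0 : 0 < t := by linarith [ht.1]
  refine ⟨t, ht, fun htop => ?_⟩
  have h2 := htm ht0
  beta_reduce at h2
  rw [ENNReal.tsum_mul_left, hχ, Set.indicator_of_mem ht, htop] at h2
  have h3 : ENNReal.ofReal t⁻¹ ≠ 0 := by simpa using ht0
  simp [ENNReal.top_mul, h3] at h2

/-- The rescaled profile `t^{-s} D(t)`, cut off to `0 < t < 1`. -/
def prof (s : ℝ) (D : ℝ → ℝ≥0∞) : ℝ → ℝ≥0∞ :=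
  (Set.Ioo (0 : ℝ) 1).indicator fun t => ENNReal.ofReal t ^ (-s) * D t

/-- Finiteness of the `L^q(dt/t)` norm of `t^{-s} D(t)` over `0 < t < 1`. -/
def FinB (s : ℝ) (q : ℝ≥0∞) (D : ℝ → ℝ≥0∞) : Prop :=
  (q = ∞ ∧ ∃ S : ℝ≥0∞, S ≠ ∞ ∧ ∀ t, prof s D t ≤ S) ∨
    (q ≠ ∞ ∧ dtt (fun t => prof s D t ^ q.toReal) ≠ ∞)

lemma measurable_prof {s : ℝ} {D : ℝ → ℝ≥0∞} (hD : Measurable D) : Measurable (prof s D) :=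
  Measurable.indicator (by fun_prop) measurableSet_Ioo

lemma prof_mono {s : ℝ} {D D' : ℝ → ℝ≥0∞} (h : ∀ t, 0 < t → D t ≤ D' t) (t : ℝ) :
    prof s D t ≤ prof s D' t := by
  refine Set.indicator_le_indicator' fun ht => ?_
  gcongr
  exact h t ht.1

lemma FinB.mono {s : ℝ} {q : ℝ≥0∞} {D D' : ℝ → ℝ≥0∞} (h : ∀ t, 0 < t → D t ≤ D' t)
    (hD : FinB s q D') : FinB s q D := by
  rcases hD with ⟨hq, S, hS, hb⟩ | ⟨hq, hb⟩
  · exact Or.inl ⟨hq, S, hS, fun t => (prof_mono h t).trans (hb t)⟩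
  · refine Or.inr ⟨hq, ne_top_of_le_ne_top hb (dtt_mono fun t _ => ?_)⟩
    exact ENNReal.rpow_le_rpow (prof_mono h t) ENNReal.toReal_nonneg

lemma besovNorm_lt_top_iff {n : ℕ} {p α s : ℝ} {q : ℝ≥0∞} (hq : 1 ≤ q) {M : ℕ} {f : En n → ℝ} :
    besovNorm n p α s q M f < ∞ ↔ wLp n p α f ≠ ∞ ∧ FinB s q (bmNorm n p α M f) := by
  unfold besovNorm
  rw [ENNReal.add_lt_top, lt_top_iff_ne_top]
  refine and_congr_right fun _ => ?_
  have hof : ∀ t ∈ Set.Ioo (0 : ℝ) 1, ENNReal.ofReal (t ^ (-s)) * wLpE n p α (ballMeans n M f t) =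
      prof s (bmNorm n p α M f) t := by
    intro t ht
    rw [prof, Set.indicator_of_mem ht, ENNReal.ofReal_rpow_of_pos ht.1]
    rfl
  by_cases hqt : q = ∞
  · simp only [hqt, if_true, FinB, true_and, ne_eq, not_true_eq_false, false_and, or_false]
    constructor
    · intro h
      refine ⟨_, h.ne, fun t => ?_⟩
      by_cases ht : t ∈ Set.Ioo (0 : ℝ) 1
      · rw [← hof t ht]
        exact le_iSup₂ (f := fun t (_ : t ∈ Set.Ioo (0 : ℝ) 1) =>
          ENNReal.ofReal (t ^ (-s)) * wLpE n p α (ballMeans n M f t)) t ht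
      · rw [prof, Set.indicator_of_notMem ht]
        exact zero_le
    · rintro ⟨S, hS, h⟩
      refine lt_of_le_of_lt (iSup₂_le fun t ht => ?_) (lt_top_iff_ne_top.2 hS)
      rw [hof t ht]
      exact h t
  · have hQ : 0 < q.toReal := ENNReal.toReal_pos (by positivity) hqt
    simp only [hqt, if_false, FinB, ne_eq, not_false_eq_true, true_and, false_and, false_or]
    rw [ENNReal.rpow_lt_top_iff_of_pos (by positivity), lt_top_iff_ne_top]
    have : ∫⁻ t in Set.Ioo (0 : ℝ) 1, ENNReal.ofReal (t ^ (-(s * q.toReal))) *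
        wLpE n p α (ballMeans n M f t) ^ q.toReal * ENNReal.ofReal t⁻¹ =
        dtt (fun t => prof s (bmNorm n p α M f) t ^ q.toReal) := by
      unfold dtt
      rw [← lintegral_indicator measurableSet_Ioi, ← lintegral_indicator measurableSet_Ioo]
      congr 1
      funext t
      by_cases ht : t ∈ Set.Ioo (0 : ℝ) 1
      · rw [Set.indicator_of_mem ht, Set.indicator_of_mem (show t ∈ Set.Ioi (0 : ℝ) from ht.1)]
        beta_reduce
        rw [← hof t ht, ENNReal.mul_rpow_of_nonneg _ _ hQ.le,
          ENNReal.ofReal_rpow_of_nonneg (Real.rpow_nonneg ht.1.le _) hQ.le,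
          ← Real.rpow_mul ht.1.le, neg_mul]
      · rw [Set.indicator_of_notMem ht]
        by_cases ht0 : t ∈ Set.Ioi (0 : ℝ)
        · rw [Set.indicator_of_mem ht0]
          beta_reduce
          rw [prof, Set.indicator_of_notMem ht,
            ENNReal.zero_rpow_of_pos hQ, zero_mul]
        · rw [Set.indicator_of_notMem ht0]
    rw [this]

lemma tsum_geom_ne_top {r : ℝ≥0∞} (hr : r < 1) : ∑' j : ℕ, r ^ j ≠ ∞ := by
  rw [ENNReal.tsum_geometric]
  exact ENNReal.inv_ne_top.2 (tsub_pos_of_lt hr).ne'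

lemma two_rpow_neg_lt_one {δ : ℝ} (hδ : 0 < δ) : (2 : ℝ≥0∞) ^ (-δ) < 1 :=
  ENNReal.rpow_lt_one_of_one_lt_of_neg (by norm_num) (by linarith)

/-- Under the hypotheses on `s` and `q`, the critical weighted sum converges along some dyadic
sequence of scales. -/
lemma FinB.exists_dyadic {s κ : ℝ} {q : ℝ≥0∞} (hq : 1 ≤ q) {D : ℝ → ℝ≥0∞} (hD : Measurable D)
    (h : FinB s q D) (hs : κ < s ∨ (s = κ ∧ q = 1)) :
    ∃ t₀ : ℝ, 0 < t₀ ∧ t₀ ≤ 1 ∧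
      ∑' j : ℕ, ENNReal.ofReal (t₀ / 2 ^ j) ^ (-κ) * D (t₀ / 2 ^ j) ≠ ∞ := by
  have hmem : ∀ t₀ ∈ Set.Ioo (1 / 2 : ℝ) 1, ∀ j : ℕ, t₀ / 2 ^ j ∈ Set.Ioo (0 : ℝ) 1 := by
    intro t₀ ht j
    have h0 : 0 < t₀ := by linarith [ht.1]
    exact ⟨by positivity, (div_le_self h0.le (one_le_pow₀ (by norm_num))).trans_lt ht.2⟩
  -- a dyadic sequence along which the profile is bounded suffices when `κ < s`
  have key : κ < s → ∀ t₀ ∈ Set.Ioo (1 / 2 : ℝ) 1, ∀ S : ℝ≥0∞, S ≠ ∞ →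
      (∀ j : ℕ, prof s D (t₀ / 2 ^ j) ≤ S) →
      ∑' j : ℕ, ENNReal.ofReal (t₀ / 2 ^ j) ^ (-κ) * D (t₀ / 2 ^ j) ≠ ∞ := by
    intro hκ t₀ ht S hS hb
    have hle : ∀ j : ℕ, ENNReal.ofReal (t₀ / 2 ^ j) ^ (-κ) * D (t₀ / 2 ^ j) ≤
        ((2 : ℝ≥0∞) ^ (-(s - κ))) ^ j * S := by
      intro j
      have hj := hmem t₀ ht j
      have hbj := hb j
      rw [prof, Set.indicator_of_mem hj] at hbj
      have e : ENNReal.ofReal (t₀ / 2 ^ j) ^ (-κ) =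
          ENNReal.ofReal (t₀ / 2 ^ j) ^ (s - κ) * ENNReal.ofReal (t₀ / 2 ^ j) ^ (-s) := by
        rw [← ENNReal.rpow_add _ _ (by simpa using hj.1) (by simp)]
        congr 1; ring
      rw [e, mul_assoc]
      refine mul_le_mul' ?_ hbj
      have h1 : ENNReal.ofReal (t₀ / 2 ^ j) ≤ (2 : ℝ≥0∞) ^ (-(j : ℝ)) := by
        rw [ENNReal.rpow_neg, ENNReal.rpow_natCast, ENNReal.ofReal_div_of_pos (by positivity),
          ENNReal.ofReal_pow (by norm_num), div_eq_mul_inv]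
        simp only [ENNReal.ofReal_ofNat]
        refine mul_le_of_le_one_left' ?_
        simpa using ht.2.le
      calc _ ≤ ((2 : ℝ≥0∞) ^ (-(j : ℝ))) ^ (s - κ) := ENNReal.rpow_le_rpow h1 (by linarith)
        _ = _ := by
          rw [← ENNReal.rpow_mul, ← ENNReal.rpow_natCast, ← ENNReal.rpow_mul]
          congr 1; ring
    refine ne_top_of_le_ne_top ?_ (ENNReal.tsum_le_tsum hle)
    rw [ENNReal.tsum_mul_right]
    exact ENNReal.mul_ne_top (tsum_geom_ne_top (two_rpow_neg_lt_one (by linarith))) hS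
  rcases h with ⟨hqt, S, hS, hb⟩ | ⟨hqt, hb⟩
  · have hκ : κ < s := by
      rcases hs with hs | ⟨_, hs⟩
      · exact hs
      · simp [hs] at hqt
    exact ⟨3 / 4, by norm_num, by norm_num,
      key hκ (3 / 4) ⟨by norm_num, by norm_num⟩ S hS fun j => hb _⟩
  · have hQ : 0 < q.toReal := ENNReal.toReal_pos (by positivity) hqt
    have hm := measurable_prof (s := s) hD
    obtain ⟨t₀, ht, hsum⟩ := exists_summable_dyadic
      (G := fun t => prof s D t ^ q.toReal) (by fun_prop) hb
    refine ⟨t₀, by linarith [ht.1], ht.2.le, ?_⟩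
    rcases hs with hs | ⟨rfl, rfl⟩
    · refine key hs t₀ ht _ (ENNReal.rpow_ne_top_of_nonneg (by positivity : 0 ≤ q.toReal⁻¹) hsum)
        fun j => ?_
      rw [← ENNReal.rpow_le_rpow_iff hQ, ← ENNReal.rpow_mul, inv_mul_cancel₀ hQ.ne',
        ENNReal.rpow_one]
      exact ENNReal.le_tsum (f := fun j : ℕ => prof s D (t₀ / 2 ^ j) ^ q.toReal) j
    · convert hsum using 3 with j
      rw [ENNReal.toReal_one, ENNReal.rpow_one, prof, Set.indicator_of_mem (hmem t₀ ht j)]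

lemma dtt_rpow_ne_top {β : ℝ} (hβ : 0 < β) :
    dtt ((Set.Ioo (0 : ℝ) 1).indicator fun t => ENNReal.ofReal t ^ β) ≠ ∞ := by
  have h := (intervalIntegral.integrableOn_Ioo_rpow_iff (s := β - 1) (zero_lt_one)).2 (by linarith)
  have h2 := h.lintegral_lt_top.ne
  refine ne_top_of_le_ne_top h2 (le_of_eq ?_)
  unfold dtt
  rw [← lintegral_indicator measurableSet_Ioi, ← lintegral_indicator measurableSet_Ioo]
  congr 1
  funext t
  by_cases ht : t ∈ Set.Ioo (0 : ℝ) 1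
  · rw [Set.indicator_of_mem (show t ∈ Set.Ioi (0 : ℝ) from ht.1), Set.indicator_of_mem ht,
      Set.indicator_of_mem ht, ENNReal.ofReal_rpow_of_pos ht.1,
      ← ENNReal.ofReal_mul (Real.rpow_nonneg ht.1.le _), Real.rpow_sub_one ht.1.ne', div_eq_mul_inv]
  · by_cases ht0 : t ∈ Set.Ioi (0 : ℝ) <;> simp [ht, ht0]

/-- A discrete Hardy inequality: splitting the ratio `ρ²` of the geometric weights as `ρ · ρ` leaves
one factor for summation and one for the `ℓ^Q` sum. -/
lemma tsum_geom_rpow_le {ρ : ℝ≥0∞} {Q : ℝ} (hQ : 0 < Q) (a : ℕ → ℝ≥0∞) :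
    (∑' j : ℕ, (ρ * ρ) ^ j * a j) ^ Q ≤
      (∑' j : ℕ, ρ ^ j) ^ Q * ∑' j : ℕ, (ρ ^ Q) ^ j * a j ^ Q := by
  set T := ∑' j : ℕ, (ρ ^ Q) ^ j * a j ^ Q with hT
  have h1 : ∀ j, (ρ * ρ) ^ j * a j ≤ ρ ^ j * T ^ Q⁻¹ := by
    intro j
    rw [mul_pow, mul_assoc]
    gcongr
    rw [← ENNReal.rpow_le_rpow_iff hQ, ← ENNReal.rpow_mul, inv_mul_cancel₀ hQ.ne', ENNReal.rpow_one]
    refine le_trans (le_of_eq ?_) (ENNReal.le_tsum (f := fun j : ℕ => (ρ ^ Q) ^ j * a j ^ Q) j)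
    rw [ENNReal.mul_rpow_of_nonneg _ _ hQ.le, ← ENNReal.rpow_natCast, ← ENNReal.rpow_natCast,
      ← ENNReal.rpow_mul, ← ENNReal.rpow_mul, mul_comm Q]
  calc _ ≤ (∑' j : ℕ, ρ ^ j * T ^ Q⁻¹) ^ Q :=
        ENNReal.rpow_le_rpow (ENNReal.tsum_le_tsum h1) hQ.le
    _ = _ := by
        rw [ENNReal.tsum_mul_right, ENNReal.mul_rpow_of_nonneg _ _ hQ.le, ← ENNReal.rpow_mul,
          inv_mul_cancel₀ hQ.ne', ENNReal.rpow_one]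

/-- Passage from the estimate at a fixed scale to the `L^q(dt/t)` norms. In terms of `t^{-s} D(t)` the
weights `2^{-jM}` become `2^{-j(M-s)}`, which are summable because `s < M`. -/
lemma FinB.of_dyadic_le {s : ℝ} {q : ℝ≥0∞} (hq : 1 ≤ q) {M : ℕ} (hsM : s < M)
    {D D₂ : ℝ → ℝ≥0∞} (hD : Measurable D) (h : FinB s q D) {C : ℝ≥0∞} (hC : C ≠ ∞)
    (hle : ∀ t : ℝ, 0 < t → ∀ J : ℕ, D₂ t ≤
      C * (∑ j ∈ Finset.range (J + 1), (2⁻¹ : ℝ≥0∞) ^ (j * M) * D (2 ^ j * t) +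
        (2⁻¹ : ℝ≥0∞) ^ (J * M))) : FinB s q D₂ := by
  set δ : ℝ := M - s with hδ
  have hδ0 : 0 < δ := by simp only [hδ]; linarith
  set ρ : ℝ≥0∞ := 2 ^ (-(δ / 2)) with hρ
  have hρ1 : ρ < 1 := two_rpow_neg_lt_one (by positivity)
  have hρρ : ρ * ρ = 2 ^ (-δ) := by
    rw [hρ, ← ENNReal.rpow_add _ _ (by simp) (by simp)]
    congr 1; ring
  set χ : ℝ → ℝ≥0∞ := (Set.Ioo (0 : ℝ) 1).indicator fun t => ENNReal.ofReal t ^ δ with hχ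
  -- the remainder `2^{-JM}` is comparable to `t^M`, hence contributes `t^δ`
  have hpt : ∀ t, prof s D₂ t ≤
      C * (∑' j : ℕ, (ρ * ρ) ^ j * prof s D (2 ^ j * t) + 2 ^ M * χ t) := by
    intro t
    by_cases ht : t ∈ Set.Ioo (0 : ℝ) 1
    swap
    · rw [prof, Set.indicator_of_notMem ht]; exact zero_le
    have ht0 : 0 < t := ht.1
    obtain ⟨N, hN⟩ := pow_unbounded_of_one_lt t⁻¹ (one_lt_two (α := ℝ))
    -- `J` is the last index with `2^J t < 1`
    obtain ⟨J, hJ1, hJ2⟩ : ∃ J : ℕ, 2 ^ J * t < 1 ∧ 1 ≤ 2 ^ (J + 1) * t := by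
      by_contra! hcon
      have hall : ∀ J : ℕ, 2 ^ J * t < 1 := by
        intro J
        induction J with
        | zero => simpa using ht.2
        | succ J ih => exact hcon J ih
      have := hall N
      rw [inv_lt_iff_one_lt_mul₀ ht0] at hN
      linarith
    have hofne : ENNReal.ofReal t ≠ 0 := by simpa using ht0
    have hprof : ∀ j ∈ Finset.range (J + 1),
        ENNReal.ofReal t ^ (-s) * ((2⁻¹ : ℝ≥0∞) ^ (j * M) * D (2 ^ j * t)) =
          (ρ * ρ) ^ j * prof s D (2 ^ j * t) := by
      intro j hj
      have hjJ : j ≤ J := Nat.lt_succ_iff.1 (Finset.mem_range.1 hj)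
      have hmem : 2 ^ j * t ∈ Set.Ioo (0 : ℝ) 1 := by
        refine ⟨by positivity, lt_of_le_of_lt ?_ hJ1⟩
        gcongr
        norm_num
      rw [prof, Set.indicator_of_mem hmem, hρρ, ENNReal.ofReal_mul (by positivity),
        ENNReal.mul_rpow_of_ne_top (by simp) (by simp), ENNReal.ofReal_pow (by norm_num)]
      have e : (2⁻¹ : ℝ≥0∞) ^ (j * M) = ((2 : ℝ≥0∞) ^ (-δ)) ^ j * (ENNReal.ofReal 2 ^ j) ^ (-s) := by
        simp only [ENNReal.ofReal_ofNat]
        rw [← ENNReal.inv_pow, ← ENNReal.rpow_natCast, ← ENNReal.rpow_natCast, ← ENNReal.rpow_natCast,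
          ← ENNReal.rpow_neg, ← ENNReal.rpow_mul, ← ENNReal.rpow_mul,
          ← ENNReal.rpow_add _ _ (by simp) (by simp)]
        congr 1
        rw [hδ]; push_cast; ring
      rw [e]
      ring
    have hlast : ENNReal.ofReal t ^ (-s) * (2⁻¹ : ℝ≥0∞) ^ (J * M) ≤ 2 ^ M * χ t := by
      have h1 : (2⁻¹ : ℝ≥0∞) ^ J ≤ 2 * ENNReal.ofReal t := by
        have : (2⁻¹ : ℝ) ^ J ≤ 2 * t := by
          rw [inv_pow, inv_le_iff_one_le_mul₀ (by positivity)]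
          rw [pow_succ] at hJ2; linarith
        have h2 := ENNReal.ofReal_le_ofReal this
        rw [ENNReal.ofReal_pow (by positivity), ENNReal.ofReal_inv_of_pos (by norm_num),
          ENNReal.ofReal_mul (by norm_num)] at h2
        simpa using h2
      rw [hχ, Set.indicator_of_mem ht, pow_mul]
      calc _ ≤ ENNReal.ofReal t ^ (-s) * (2 * ENNReal.ofReal t) ^ M := by gcongr
        _ = 2 ^ M * (ENNReal.ofReal t ^ (-s) * ENNReal.ofReal t ^ (M : ℝ)) := by
            rw [ENNReal.rpow_natCast]; ring
        _ = _ := by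
            rw [← ENNReal.rpow_add _ _ hofne (by simp)]
            congr 2
            rw [hδ]; ring
    rw [prof, Set.indicator_of_mem ht]
    calc _ ≤ ENNReal.ofReal t ^ (-s) * (C * (∑ j ∈ Finset.range (J + 1),
          (2⁻¹ : ℝ≥0∞) ^ (j * M) * D (2 ^ j * t) + (2⁻¹ : ℝ≥0∞) ^ (J * M))) := by
          gcongr
          exact hle t ht0 J
      _ = C * (∑ j ∈ Finset.range (J + 1), (ρ * ρ) ^ j * prof s D (2 ^ j * t) +
          ENNReal.ofReal t ^ (-s) * (2⁻¹ : ℝ≥0∞) ^ (J * M)) := by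
          rw [← Finset.sum_congr rfl hprof, ← Finset.mul_sum]
          ring
      _ ≤ _ := by
          gcongr
          exact ENNReal.sum_le_tsum _
  have hgeo : ∑' j : ℕ, (ρ * ρ) ^ j ≠ ∞ :=
    tsum_geom_ne_top (by rw [hρρ]; exact two_rpow_neg_lt_one hδ0)
  have h2M : (2 : ℝ≥0∞) ^ M ≠ ∞ := by finiteness
  rcases h with ⟨hqt, S, hS, hb⟩ | ⟨hqt, hb⟩
  · refine Or.inl ⟨hqt, C * ((∑' j : ℕ, (ρ * ρ) ^ j) * S + 2 ^ M), by finiteness, fun t => ?_⟩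
    refine (hpt t).trans ?_
    rw [← ENNReal.tsum_mul_right]
    have hχ1 : χ t ≤ 1 := by
      by_cases ht : t ∈ Set.Ioo (0 : ℝ) 1
      swap
      · rw [hχ, Set.indicator_of_notMem ht]; exact zero_le
      rw [hχ, Set.indicator_of_mem ht]
      exact ENNReal.rpow_le_one (by simpa using ht.2.le) hδ0.le
    refine mul_le_mul_right (add_le_add (ENNReal.tsum_le_tsum fun j => ?_) ?_) _
    · exact mul_le_mul_right (hb _) _
    · exact mul_le_of_le_one_right' hχ1
  · have hQ1 : 1 ≤ q.toReal := by
      rw [← ENNReal.toReal_one]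
      exact ENNReal.toReal_mono hqt hq
    set Q := q.toReal with hQdef
    have hQ : 0 < Q := by linarith
    have hm := measurable_prof (s := s) hD
    have hχm : Measurable χ := Measurable.indicator (by fun_prop) measurableSet_Ioo
    refine Or.inr ⟨hqt, ?_⟩
    set c1 : ℝ≥0∞ := C ^ Q * 2 ^ (Q - 1) with hc1
    have hpt2 : ∀ t, prof s D₂ t ^ Q ≤ c1 * ((∑' j : ℕ, ρ ^ j) ^ Q *
        ∑' j : ℕ, (ρ ^ Q) ^ j * prof s D (2 ^ j * t) ^ Q + (2 ^ M) ^ Q * χ t ^ Q) := by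
      intro t
      calc _ ≤ (C * (∑' j : ℕ, (ρ * ρ) ^ j * prof s D (2 ^ j * t) + 2 ^ M * χ t)) ^ Q :=
            ENNReal.rpow_le_rpow (hpt t) hQ.le
        _ ≤ C ^ Q * (2 ^ (Q - 1) * ((∑' j : ℕ, (ρ * ρ) ^ j * prof s D (2 ^ j * t)) ^ Q +
              (2 ^ M * χ t) ^ Q)) := by
            rw [ENNReal.mul_rpow_of_nonneg _ _ hQ.le]
            gcongr
            exact ENNReal.rpow_add_le_mul_rpow_add_rpow _ _ hQ1
        _ ≤ _ := by
            rw [← mul_assoc]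
            gcongr
            · exact tsum_geom_rpow_le hQ _
            · rw [ENNReal.mul_rpow_of_nonneg _ _ hQ.le]
    have hfin : dtt (fun t => c1 * ((∑' j : ℕ, ρ ^ j) ^ Q *
        ∑' j : ℕ, (ρ ^ Q) ^ j * prof s D (2 ^ j * t) ^ Q + (2 ^ M) ^ Q * χ t ^ Q)) ≠ ∞ := by
      rw [dtt_const_mul (by fun_prop), dtt_add (by fun_prop), dtt_const_mul (by fun_prop),
        dtt_const_mul (by fun_prop), dtt_tsum (fun j => by fun_prop)]
      have e : ∀ j : ℕ, dtt (fun t => (ρ ^ Q) ^ j * prof s D (2 ^ j * t) ^ Q) =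
          (ρ ^ Q) ^ j * dtt (fun t => prof s D t ^ Q) := by
        intro j
        rw [dtt_const_mul (by fun_prop), dtt_dilate (G := fun t => prof s D t ^ Q) (by fun_prop)
          (by positivity : (0 : ℝ) < 2 ^ j)]
      rw [tsum_congr e, ENNReal.tsum_mul_right]
      have f1 : (∑' j : ℕ, ρ ^ j) ^ Q ≠ ∞ :=
        ENNReal.rpow_ne_top_of_nonneg hQ.le (tsum_geom_ne_top hρ1)
      have f2 : ∑' j : ℕ, (ρ ^ Q) ^ j ≠ ∞ :=
        tsum_geom_ne_top (ENNReal.rpow_lt_one hρ1 hQ)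
      have f3 : dtt (fun t => χ t ^ Q) ≠ ∞ := by
        have := dtt_rpow_ne_top (mul_pos hδ0 hQ)
        refine ne_top_of_le_ne_top this (dtt_mono fun t _ => le_of_eq ?_)
        by_cases ht : t ∈ Set.Ioo (0 : ℝ) 1
        · simp only [hχ, Set.indicator_of_mem ht, ENNReal.rpow_mul]
        · simp only [hχ, Set.indicator_of_notMem ht, ENNReal.zero_rpow_of_pos hQ]
      have f4 : ((2 : ℝ≥0∞) ^ M) ^ Q ≠ ∞ := ENNReal.rpow_ne_top_of_nonneg hQ.le h2M
      have f5 : c1 ≠ ∞ := ENNReal.mul_ne_top (ENNReal.rpow_ne_top_of_nonneg hQ.le hC)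
        (ENNReal.rpow_ne_top_of_nonneg (by linarith) (by simp))
      finiteness
    exact ne_top_of_le_ne_top hfin (dtt_mono fun t _ => hpt2 t)

/-! ### Conclusion -/

/-- Modifying a function on a null set does not change its ball means in `L^p(|·|^α)`. -/
lemma bmNorm_le_of_ae {n : ℕ} {p α : ℝ} (A : Adm n p α) {M : ℕ} {f g : En n → ℝ}
    (hf : Measurable f) (hg : Measurable g) (h : f =ᵐ[volume] g) {t : ℝ} (ht : 0 < t) :
    bmNorm n p α M f t ≤ bmNorm n p α M g t := by
  obtain ⟨C, hC, hb⟩ := ballMeans_Lp A M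
  set u : En n → ℝ := fun x => f x - g x with hu
  have hum : Measurable u := hf.sub hg
  have hzero : wLpE n p α (fun x => ‖u x‖ₑ) = 0 := by
    refine le_antisymm ?_ zero_le
    rw [← wLpE_zero n A.hp (α := α)]
    refine wLpE_mono_ae n A.hp ?_
    filter_upwards [h] with x hx
    simp [hu, hx]
  have hpt : ∀ x, ballMeans n M f t x ≤ ballMeans n M g t x + ballMeans n M u t x := by
    intro x
    have e : f = fun y => g y + u y := by funext y; simp [hu]
    have m : Measurable (fun h : En n => iterDiff n M g (t • h) x) := by
      unfold iterDiff; fun_prop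
    unfold ballMeans
    rw [← lintegral_add_left (by fun_prop)]
    refine lintegral_mono fun k => ?_
    simp only
    rw [← enorm_eq_nnnorm, ← enorm_eq_nnnorm, ← enorm_eq_nnnorm]
    conv_lhs => rw [e, iterDiff_add]
    exact enorm_add_le _ _
  calc _ ≤ wLpE n p α (fun x => ballMeans n M g t x + ballMeans n M u t x) :=
        wLpE_mono n A.hp hpt
    _ ≤ bmNorm n p α M g t + wLpE n p α (ballMeans n M u t) :=
        wLpE_add_le n A.hp (measurable_ballMeans hg t) (measurable_ballMeans hum t)
    _ ≤ bmNorm n p α M g t + 0 := by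
        gcongr
        refine (hb t ht u hum).trans ?_
        rw [hzero, mul_zero]
    _ = _ := add_zero _

/-- If `s > (n+α)/p`, or `s = (n+α)/p` and `q = 1`, then the square of any function in the
weighted Besov space `B^s_{p,q}(ℝ^n, |·|^α)` again belongs to this space. -/
theorem sq_mem_besov
    (n : ℕ) (hn : 1 ≤ n) (p α s : ℝ) (q : ℝ≥0∞) (M : ℕ)
    (hp : 1 < p) (hq : 1 ≤ q) (hα0 : 0 ≤ α) (hα : α < n * (p - 1)) (hsM : s < (M : ℝ))
    (hs : ((n : ℝ) + α) / p < s ∨ (s = ((n : ℝ) + α) / p ∧ q = 1))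
    (f : EuclideanSpace ℝ (Fin n) → ℝ) (hf : MemBesov n p α s q M f) :
    MemBesov n p α s q M (fun x => f x ^ 2) := by
  obtain ⟨hfm, hfin⟩ := hf
  have A : Adm n p α := ⟨hn, hp, hα0, hα⟩
  obtain ⟨hfL, hfB⟩ := (besovNorm_lt_top_iff hq).1 hfin
  refine ⟨by fun_prop, (besovNorm_lt_top_iff hq).2 ?_⟩
  obtain ⟨R, K, hR, hK, c, hc, hrep⟩ := exists_ker n M
  have H : RepKer n M R K c := ⟨hR, hK, hc, hrep⟩
  obtain ⟨t₀, ht₀, ht₁, hsum⟩ := hfB.exists_dyadic hq (measurable_bmNorm hfm) hs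
  obtain ⟨B, hB, hae⟩ := H.ae_bdd A (A.uli hfm hfL) ht₀ ht₁ hsum
  -- truncation makes `f` bounded everywhere without changing it almost everywhere
  set b : ℝ := B.toReal with hb
  have hb0 : 0 ≤ b := ENNReal.toReal_nonneg
  set g : En n → ℝ := fun x => max (-b) (min b (f x)) with hg
  have hgm : Measurable g := by fun_prop
  have hgb : ∀ x, ‖g x‖ₑ ≤ B := by
    intro x
    rw [← ofReal_norm, ← ENNReal.ofReal_toReal hB]
    refine ENNReal.ofReal_le_ofReal ?_
    rw [Real.norm_eq_abs, abs_le]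
    exact ⟨le_max_left _ _, max_le (by linarith) (min_le_left _ _)⟩
  have hfg : f =ᵐ[volume] g := by
    filter_upwards [hae] with x hx
    have : |f x| ≤ b := by
      rw [← Real.norm_eq_abs, ← toReal_enorm]
      exact ENNReal.toReal_mono hB hx
    rw [abs_le] at this
    simp only [hg]
    rw [min_eq_right this.2, max_eq_right this.1]
  have hfg2 : (fun x => f x ^ 2) =ᵐ[volume] fun x => g x ^ 2 := by
    filter_upwards [hfg] with x hx
    rw [hx]
  have hgL : wLp n p α g ≠ ∞ := by
    refine ne_top_of_le_ne_top hfL (wLpE_mono_ae n hp ?_)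
    filter_upwards [hfg] with x hx
    rw [hx]
  have hgB : FinB s q (bmNorm n p α M g) :=
    hfB.mono fun t ht => bmNorm_le_of_ae A hgm hfm hfg.symm ht
  obtain ⟨C, hC, hest⟩ := H.bmNorm_sq A hgm hB hgb hgL
  constructor
  · refine ne_top_of_le_ne_top (ENNReal.mul_ne_top hB hfL) ?_
    rw [wLp_eq, wLp_eq, ← wLpE_const_mul n hp _ (by fun_prop)]
    refine wLpE_mono_ae n hp ?_
    filter_upwards [hae] with x hx
    rw [sq, enorm_mul]
    gcongr
  · have hg2 : FinB s q (bmNorm n p α M fun x => g x ^ 2) :=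
      hgB.of_dyadic_le hq hsM (measurable_bmNorm hgm) hC hest
    exact hg2.mono fun t ht => bmNorm_le_of_ae A (by fun_prop) (by fun_prop) hfg2 ht
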